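/- arXiv:1303.2453 — 2 statements merged into one kernel-verified Lean document; each statement's English description precedes it below -/
import Mathlib

section
/- Let ρ be a run of a level-2 collapsible pushdown system starting in a stack s with topmost word w=TOP₂(s). Then ρ is a return from s to Pop₂(s) that does not pass Pop₁(s) if and only if ρ ∈ Runs(s,Pop₂(s)) and there is a uniquely determined sequence 0=j₀ ≤ i₁ < j₁ ≤ i₂ < j₂ ≤ ⋯ ≤ i_n < j_n ≤ i_{n+1} = length(ρ)−1 such that: (1) s ⊑ ρ↾[j_{k−1},i_k] for all 1≤k≤n+1; (2) for each 1≤k≤n there is a stack s_k with TOP₂(s_k)=Pop₁(w) such that ρ↾[i_k+1,j_k] is a return from s_k to Pop₂(s_k); (3) for all 1≤k≤n, TOP₂(ρ(i_k))=w and the operation at i_k is a Pop₁ or a Collapse of level 1; (4) either w is a proper word-prefix of TOP₂(ρ(i_{n+1})) and the operation at i_{n+1} is a Collapse of level 2, or w is a word-prefix of TOP₂(ρ(i_{n+1})) and the operation at i_{n+1} is Pop₂. -/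
namespace CPG

/-! ## Level-2 collapsible pushdown stacks -/

/-- Stack letters: `Sum.inl σ` is a letter with a level-1 link,
`Sum.inr (σ, k)` is a letter with a level-2 link to the substack of width `k`. -/
abbrev Letter (A : Type) := A ⊕ (A × ℕ)

def symOf {A : Type} : Letter A → A
  | Sum.inl a => a
  | Sum.inr (a, _) => a

def lvlOf {A : Type} : Letter A → ℕ
  | Sum.inl _ => 1
  | Sum.inr _ => 2

abbrev Word (A : Type) := List (Letter A)

/-- A 2-word: a list of words; the last word is the topmost one. -/
abbrev Stack2 (A : Type) := List (Word A)

/-- The initial level-2 stack `⊥₂`. -/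
def bottom2 {A : Type} (bot : A) : Stack2 A := [[Sum.inl bot]]

def top2 {A : Type} (s : Stack2 A) : Option (Word A) := s.getLast?

def top1 {A : Type} (s : Stack2 A) : Option (Letter A) := s.getLast?.bind List.getLast?

def symS {A : Type} (s : Stack2 A) : Option A := (top1 s).map symOf

def lvlS {A : Type} (s : Stack2 A) : Option ℕ := (top1 s).map lvlOf

def lnkS {A : Type} (s : Stack2 A) : Option ℕ :=
  match top1 s, top2 s with
  | some (Sum.inr (_, j)), _ => some j
  | some (Sum.inl _), some w => some (w.length - 1)
  | _, _ => none

def clone2 {A : Type} (s : Stack2 A) : Option (Stack2 A) :=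
  (top2 s).map fun w => s ++ [w]

def push1 {A : Type} [DecidableEq A] (bot a : A) (s : Stack2 A) : Option (Stack2 A) :=
  if a = bot then none else (top2 s).map fun w => s.dropLast ++ [w ++ [Sum.inl a]]

def push2 {A : Type} [DecidableEq A] (bot a : A) (s : Stack2 A) : Option (Stack2 A) :=
  if a = bot then none else
    (top2 s).map fun w => s.dropLast ++ [w ++ [Sum.inr (a, s.length - 1)]]

def pop2 {A : Type} (s : Stack2 A) : Option (Stack2 A) :=
  if 1 < s.length then some s.dropLast else none

def pop1 {A : Type} (s : Stack2 A) : Option (Stack2 A) :=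
  match s.getLast? with
  | some w => if 1 < w.length then some (s.dropLast ++ [w.dropLast]) else none
  | none => none

def collapse {A : Type} (s : Stack2 A) : Option (Stack2 A) :=
  match top1 s with
  | some (Sum.inr (_, k)) => if 0 < k then some (s.take k) else none
  | some (Sum.inl _) => pop1 s
  | none => none

/-- The level-2 stack operations. -/
inductive Op (A : Type) where
  | clone2 | pop1 | pop2 | collapse
  | push1 (a : A) | push2 (a : A)

def applyOp {A : Type} [DecidableEq A] (bot : A) : Op A → Stack2 A → Option (Stack2 A)
  | .clone2 => clone2
  | .pop1 => pop1
  | .pop2 => pop2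
  | .collapse => collapse
  | .push1 a => push1 bot a
  | .push2 a => push2 bot a

/-- `Stacks(Σ)` : the smallest set containing `⊥₂` and closed under the operations. -/
inductive IsStack {A : Type} [DecidableEq A] (bot : A) : Stack2 A → Prop where
  | base : IsStack bot (bottom2 bot)
  | step {s t : Stack2 A} (op : Op A) : IsStack bot s → applyOp bot op s = some t →
      IsStack bot t

/-- Iterated application of a partial stack operation. -/
def iter {A : Type} (f : Stack2 A → Option (Stack2 A)) : ℕ → Stack2 A → Option (Stack2 A)
  | 0, s => some s
  | n + 1, s => (f s).bind (iter f n)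

/-- `t` is a substack of `s`: `t = Pop₁ⁿ(Pop₂ᵐ(s))`. -/
def Substack {A : Type} (t s : Stack2 A) : Prop :=
  ∃ n m, (iter pop2 m s).bind (iter pop1 n) = some t

def ProperSubstack {A : Type} (t s : Stack2 A) : Prop := Substack t s ∧ t ≠ s

/-- `s` is a prefix of `t` (`s ⊑ t`). -/
def StackPrefix {A : Type} (s t : Stack2 A) : Prop :=
  s ≠ [] ∧ s.length ≤ t.length ∧ s.dropLast <+: t ∧
    ∀ j, s.length - 1 ≤ j → j < t.length → s.getLastD [] <+: t.getD j []

/-- `t[s/u]` : the stack obtained from `t` by replacing the prefix `s` by `u`. -/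
def substPrefix {A : Type} (t s u : Stack2 A) : Stack2 A :=
  u.dropLast ++
    (t.drop (s.length - 1)).map fun v => u.getLastD [] ++ v.drop (s.getLastD []).length

/-! ## Collapsible pushdown systems and runs -/

/-- A level-2 collapsible pushdown system. -/
structure CPS (Q A Γ : Type) where
  bot : A
  q0 : Q
  Δ : Set (Q × A × Γ × Q × Op A)

variable {Q A Γ : Type} [DecidableEq A]

/-- A `γ`-labelled transition realized by the operation `op`. -/
def TransOp (S : CPS Q A Γ) (γ : Γ) (op : Op A) (c c' : Q × Stack2 A) : Prop :=
  ∃ σ : A, symS c.2 = some σ ∧ (c.1, σ, γ, c'.1, op) ∈ S.Δ ∧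
    applyOp S.bot op c.2 = some c'.2

def Trans (S : CPS Q A Γ) (γ : Γ) (c c' : Q × Stack2 A) : Prop :=
  ∃ op, TransOp S γ op c c'

/-- A run of a collapsible pushdown system (recording configurations, labels and
operations of each step). -/
structure Run (S : CPS Q A Γ) where
  len : ℕ
  cfg : ℕ → Q × Stack2 A
  lab : ℕ → Γ
  op : ℕ → Op A
  ok : ∀ i, i < len → TransOp S (lab i) (op i) (cfg i) (cfg (i + 1))

def Run.stk {S : CPS Q A Γ} (ρ : Run S) (i : ℕ) : Stack2 A := (ρ.cfg i).2

/-- The word of labels along a run. -/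
def Run.labels {S : CPS Q A Γ} (ρ : Run S) : List Γ :=
  List.ofFn fun i : Fin ρ.len => ρ.lab i

/-- `Reach_L`-reachability: a run from `c` to `c'` labelled by a word in `L`. -/
def ReachL (S : CPS Q A Γ) (L : Language Γ) (c c' : Q × Stack2 A) : Prop :=
  ∃ ρ : Run S, ρ.cfg 0 = c ∧ ρ.cfg ρ.len = c' ∧ ρ.labels ∈ L

/-- Plain reachability. -/
def Reach (S : CPS Q A Γ) (c c' : Q × Stack2 A) : Prop :=
  ∃ ρ : Run S, ρ.cfg 0 = c ∧ ρ.cfg ρ.len = c'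

/-! ## ε-contraction -/

def oneLetterLang (γ : Γ) : Language Γ := {[γ]}

def nonEpsLang (eps : Γ) : Language Γ := {w | ∃ γ : Γ, γ ≠ eps ∧ w = [γ]}

/-- The language `{ε}*`. -/
def epsStar (eps : Γ) : Language Γ := KStar.kstar (oneLetterLang eps)

/-- The language `({ε}*(Γ∖{ε}))*`. -/
def domLang (eps : Γ) : Language Γ :=
  KStar.kstar (epsStar eps * nonEpsLang eps)

/-- The language `{ε}*γ`. -/
def edgeLang (eps γ : Γ) : Language Γ := epsStar eps * oneLetterLang γ

/-- The vertex set of the ε-contraction `G/ε`. -/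
def EpsDomain (S : CPS Q A Γ) (eps : Γ) : Set (Q × Stack2 A) :=
  {c | ReachL S (domLang eps) (S.q0, bottom2 S.bot) c}

/-! ## (Generalised) milestones and the order ≪ -/

/-- `wordAt bot s i` is the word `wᵢ` of `s`, with the convention `w₀ = ⊥`. -/
def wordAt {A : Type} (bot : A) (s : Stack2 A) (i : ℕ) : Word A :=
  if i = 0 then [Sum.inl bot] else s.getD (i - 1) []

/-- Longest common prefix of two words. -/
def lcp {α : Type} [DecidableEq α] : List α → List α → List α
  | a :: s, b :: t => if a = b then a :: lcp s t else []
  | _, _ => []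

/-- `m` is a generalised milestone of `s`. -/
def GenMilestone (bot : A) (s m : Stack2 A) : Prop :=
  ∃ i v, i < s.length ∧ m = s.take i ++ [v] ∧
    lcp (wordAt bot s i) (wordAt bot s (i + 1)) <+: v ∧
    (v <+: wordAt bot s i ∨ v <+: wordAt bot s (i + 1))

/-- `m` is a milestone of `s`. -/
def Milestone (bot : A) (s m : Stack2 A) : Prop :=
  ∃ i v, i < s.length ∧ m = s.take i ++ [v] ∧
    lcp (wordAt bot s i) (wordAt bot s (i + 1)) <+: v ∧
    v <+: wordAt bot s (i + 1)

def genMilestones (bot : A) (s : Stack2 A) : Set (Stack2 A) := {m | GenMilestone bot s m}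

def milestones (bot : A) (s : Stack2 A) : Set (Stack2 A) := {m | Milestone bot s m}

/-- The base cases of the partial order `≪`. -/
def llBase (bot : A) (s t : Stack2 A) : Prop :=
  s.length < t.length ∨
    (s ≠ [] ∧ s.length = t.length ∧ s.dropLast = t.dropLast ∧
      ((t.getLastD [] <+: s.getLastD [] ∧ t.getLastD [] ≠ s.getLastD [] ∧
          s.getLastD [] <+: wordAt bot s (s.length - 1)) ∨
        (s.getLastD [] <+: t.getLastD [] ∧ s.getLastD [] ≠ t.getLastD [] ∧
          ¬ t.getLastD [] <+: wordAt bot s (s.length - 1))))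

/-- The order `≪`: the smallest reflexive transitive relation containing `llBase`. -/
def ll (bot : A) : Stack2 A → Stack2 A → Prop := Relation.ReflTransGen (llBase bot)

/-- `m'` is the ≪-successor of `m` within `genMilestones bot s`. -/
def LlSuccessor (bot : A) (s m m' : Stack2 A) : Prop :=
  GenMilestone bot s m ∧ GenMilestone bot s m' ∧ m ≠ m' ∧ ll bot m m' ∧
    ∀ m'', GenMilestone bot s m'' → ll bot m m'' → m'' ≠ m → ll bot m' m''

/-! ## Loops, returns and 1-loops -/

/-- The segment `[i,j]` of `ρ` is a loop (of its initial stack). -/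
def LoopSeg {S : CPS Q A Γ} (ρ : Run S) (i j : ℕ) : Prop :=
  i ≤ j ∧ j ≤ ρ.len ∧ ρ.stk j = ρ.stk i ∧
    (∀ k, i ≤ k → k ≤ j → ∀ t, pop2 (ρ.stk i) = some t → ¬ Substack (ρ.stk k) t) ∧
    (∀ k, i ≤ k → k ≤ j → ∀ m, 0 < m → ∀ t, iter pop1 m (ρ.stk i) = some t →
      ρ.stk k = t → ∀ m', m' < m → ∃ t', iter pop1 m' (ρ.stk i) = some t' ∧
        lvlS t' = some 1)

/-- A high loop: a loop that never visits `Pop₁` of its stack. -/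
def HighLoopSeg {S : CPS Q A Γ} (ρ : Run S) (i j : ℕ) : Prop :=
  LoopSeg ρ i j ∧ ∀ k, i ≤ k → k ≤ j → ∀ t, pop1 (ρ.stk i) = some t → ρ.stk k ≠ t

/-- A low loop: a loop whose second and second-to-last stacks are `Pop₁` of its stack. -/
def LowLoopSeg {S : CPS Q A Γ} (ρ : Run S) (i j : ℕ) : Prop :=
  LoopSeg ρ i j ∧ i < j ∧
    ∃ t, pop1 (ρ.stk i) = some t ∧ ρ.stk (i + 1) = t ∧ ρ.stk (j - 1) = t

/-- The common part of the definition of a return on the segment `[i,j]`: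
it leads from its initial stack `t` to `Pop₂(t)` and never visits a substack
of `Pop₂(t)` before its final configuration. -/
def RetShell {S : CPS Q A Γ} (ρ : Run S) (i j : ℕ) : Prop :=
  i < j ∧ j ≤ ρ.len ∧ pop2 (ρ.stk i) = some (ρ.stk j) ∧
    ∀ k, i ≤ k → k < j → ¬ Substack (ρ.stk k) (ρ.stk j)

/-- The segment `[i,j]` of `ρ` is a return (from its initial stack `t` to `Pop₂(t)`). -/
inductive RetSeg {S : CPS Q A Γ} (ρ : Run S) : ℕ → ℕ → Prop where
  | pop2 {i j : ℕ} (h : RetShell ρ i j) (hop : ρ.op (j - 1) = Op.pop2) : RetSeg ρ i j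
  | collapse {i j : ℕ} (h : RetShell ρ i j) (hop : ρ.op (j - 1) = Op.collapse)
      (hpre : ∃ w w', top2 (ρ.stk i) = some w ∧ top2 (ρ.stk (j - 1)) = some w' ∧
        w <+: w' ∧ w ≠ w') : RetSeg ρ i j
  | sub {i k j : ℕ} (h : RetShell ρ i j) (hik : i < k) (hkj : k ≤ j)
      (hpop : pop1 (ρ.stk i) = some (ρ.stk k)) (hret : RetSeg ρ k j) : RetSeg ρ i j

/-- The segment `[i,j]` of `ρ` is a level-1-loop. -/
def OneLoopSeg {S : CPS Q A Γ} (ρ : Run S) (i j : ℕ) : Prop :=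
  i ≤ j ∧ j ≤ ρ.len ∧
    ∃ (s : Stack2 A) (w : Word A) (s' : Stack2 A),
      ρ.stk i = s ++ [w] ∧ ρ.stk j = s ++ s' ++ [w] ∧
      (∀ k, i ≤ k → k ≤ j → s.length < (ρ.stk k).length) ∧
      (∀ k, i ≤ k → k ≤ j → 1 < w.length → top2 (ρ.stk k) = some w.dropLast →
        ∃ m, k < m ∧ m ≤ j ∧ RetSeg ρ k m)

/-! ## ExRet, ExLoop, ... -/

/-- `w↓₀` : replace every level-2 link by `0`. -/
def down0 {A : Type} : Word A → Word A :=
  List.map fun a => match a with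
    | Sum.inl x => Sum.inl x
    | Sum.inr (x, _) => Sum.inr (x, 0)

def ExRet (S : CPS Q A Γ) (w : Word A) : Set (Q × Q) :=
  {p | ∃ ρ : Run S, ρ.cfg 0 = (p.1, [down0 w, down0 w]) ∧
    ρ.cfg ρ.len = (p.2, [down0 w]) ∧ RetSeg ρ 0 ρ.len}

def ExLoop (S : CPS Q A Γ) (w : Word A) : Set (Q × Q) :=
  {p | ∃ ρ : Run S, ρ.cfg 0 = (p.1, [down0 w]) ∧ ρ.cfg ρ.len = (p.2, [down0 w]) ∧
    LoopSeg ρ 0 ρ.len}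

def ExHLoop (S : CPS Q A Γ) (w : Word A) : Set (Q × Q) :=
  {p | ∃ ρ : Run S, ρ.cfg 0 = (p.1, [down0 w]) ∧ ρ.cfg ρ.len = (p.2, [down0 w]) ∧
    HighLoopSeg ρ 0 ρ.len}

def ExLLoop (S : CPS Q A Γ) (w : Word A) : Set (Q × Q) :=
  {p | ∃ ρ : Run S, ρ.cfg 0 = (p.1, [down0 w]) ∧ ρ.cfg ρ.len = (p.2, [down0 w]) ∧
    LowLoopSeg ρ 0 ρ.len}

def ExOneLoop (S : CPS Q A Γ) (w : Word A) : Set (Q × Q) :=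
  {p | ∃ (ρ : Run S) (s' : Stack2 A), ρ.cfg 0 = (p.1, [down0 w]) ∧
    ρ.cfg ρ.len = (p.2, s' ++ [down0 w]) ∧ OneLoopSeg ρ 0 ρ.len}

/-! ## Finite binary trees -/

/-- Finite binary trees with labels in `α` and optional left/right children. -/
inductive PTree (α : Type) where
  | node (a : α) (l r : Option (PTree α)) : PTree α

/-- The label of the node at address `d` (`false` = left/0, `true` = right/1). -/
def PTree.labelAt {α : Type} : PTree α → List Bool → Option α
  | .node a _ _, [] => some a
  | .node _ (some t) _, false :: d => t.labelAt d
  | .node _ none _, false :: _ => none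
  | .node _ _ (some t), true :: d => t.labelAt d
  | .node _ _ none, true :: _ => none

def PTree.map {α β : Type} (f : α → β) : PTree α → PTree β
  | .node a l r =>
    .node (f a)
      (match l with | none => none | some t => some (t.map f))
      (match r with | none => none | some t => some (t.map f))

/-- Convolution of two trees, with `none` as padding symbol `□`. -/
def PTree.conv {α β : Type} : PTree α → PTree β → PTree (Option α × Option β)
  | .node a l r, .node b l' r' =>
    .node (some a, some b)
      (match l, l' with
        | none, none => none
        | some t, none => some (t.map fun x => (some x, none))
        | none, some u => some (u.map fun x => (none, some x))
        | some t, some u => some (PTree.conv t u))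
      (match r, r' with
        | none, none => none
        | some t, none => some (t.map fun x => (some x, none))
        | none, some u => some (u.map fun x => (none, some x))
        | some t, some u => some (PTree.conv t u))

/-- A (bottom-up nondeterministic) finite tree automaton. -/
structure TreeAut (α : Type) where
  St : Type
  fin : Finite St
  qI : St
  F : Set St
  Δ : Set (St × α × St × St)

/-- Acceptance of a finite tree by a tree automaton. -/
def TreeAut.Accepts {α : Type} (M : TreeAut α) (t : PTree α) : Prop :=
  ∃ ρ : List Bool → M.St,
    (∀ d, t.labelAt d = none → ρ d = M.qI) ∧
    (∀ d a, t.labelAt d = some a → (ρ d, a, ρ (d ++ [false]), ρ (d ++ [true])) ∈ M.Δ) ∧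
    ρ [] ∈ M.F

/-- A family of binary relations on `B` is tree-automatic. -/
def IsTreeAutomatic {B : Type} {I : Type} (E : I → B → B → Prop) : Prop :=
  ∃ (α : Type) (_ : Finite α) (AB : TreeAut α) (AE : I → TreeAut (Option α × Option α))
    (f : {t : PTree α // AB.Accepts t} → B),
    Function.Bijective f ∧
      ∀ (i : I) (t₁ t₂ : {t : PTree α // AB.Accepts t}),
        (AE i).Accepts (PTree.conv t₁.1 t₂.1) ↔ E i (f t₁) (f t₂)

/-! ## The encoding of configurations as trees -/

/-- Labels of encoding trees: a state, a pair (symbol, link level), or `ε`. -/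
abbrev EncLabel (Q A : Type) := Q ⊕ ((A × ℕ) ⊕ Unit)

def epsLab {Q A : Type} : EncLabel Q A := Sum.inr (Sum.inr ())

def symLab {Q A : Type} (τ : Letter A) : EncLabel Q A := Sum.inr (Sum.inl (symOf τ, lvlOf τ))

/-- Encoding of blocklines as trees (with a fuel parameter driving the recursion;
the fuel used in `encStack` is large enough so that it never runs out on actual
blocklines). The left subtree encodes the blockline induced by the first maximal
block, the right subtree the remaining blocks. -/
def encBL (Q : Type) {A : Type} [DecidableEq A] :
    ℕ → EncLabel Q A → List (Word A) → PTree (EncLabel Q A)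
  | 0, σ, _ => .node σ none none
  | _ + 1, σ, [] => .node σ none none
  | fuel + 1, σ, w :: rest =>
    if w.length ≤ 1 then
      match rest with
      | [] => .node σ none none
      | _ :: _ => .node σ none (some (encBL Q fuel epsLab rest))
    else
      let p : Word A → Bool := fun v => decide (v.take 2 = w.take 2)
      let blk := (w :: rest).takeWhile p
      let restBlk := (w :: rest).dropWhile p
      .node σ
        (some (encBL Q fuel
          (match w[1]? with | some τ' => symLab τ' | none => epsLab)
          (blk.map List.tail)))
        (match restBlk with
          | [] => none
          | _ :: _ => some (encBL Q fuel epsLab restBlk))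

/-- The total number of letters of a 2-word. -/
def size2 {A : Type} (s : Stack2 A) : ℕ := (s.map List.length).sum

/-- The encoding `Enc(s) = Enc(s, (⊥,1))` of a stack. -/
def encStack (Q : Type) {A : Type} [DecidableEq A] (bot : A) (s : Stack2 A) :
    PTree (EncLabel Q A) :=
  encBL Q (size2 s + 1) (Sum.inr (Sum.inl (bot, 1))) s

/-- The encoding of a configuration: the state at the root, `Enc(s)` as left subtree. -/
def Enc {Q A : Type} [DecidableEq A] (bot : A) (c : Q × Stack2 A) : PTree (EncLabel Q A) :=
  .node (Sum.inl c.1) (some (encStack Q bot c.2)) none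

/-- The class `EncTrees` of encoding trees. -/
def EncTrees (Q A : Type) (bot : A) : Set (PTree (EncLabel Q A)) :=
  {T | (∃ q : Q, T.labelAt [] = some (Sum.inl q)) ∧
    T.labelAt [true] = none ∧ T.labelAt [false] ≠ none ∧
    T.labelAt [false] = some (Sum.inr (Sum.inl (bot, 1))) ∧
    (∀ (d : List Bool) (x : EncLabel Q A),
      T.labelAt (false :: (d ++ [false])) = some x →
        ∃ (σ : A) (l : ℕ), σ ≠ bot ∧ (l = 1 ∨ l = 2) ∧ x = Sum.inr (Sum.inl (σ, l))) ∧
    (∀ (d : List Bool) (x : EncLabel Q A), T.labelAt (d ++ [true]) = some x → x = epsLab) ∧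
    (∀ (d : List Bool) (σ : A), ¬ (T.labelAt (d ++ [false]) = some (Sum.inr (Sum.inl (σ, 1))) ∧
      T.labelAt (d ++ [true, false]) = some (Sum.inr (Sum.inl (σ, 1)))))}

/-- Restriction of a tree to the nodes lexicographically ≤ `d`. -/
def restrictLex {α : Type} : PTree α → List Bool → PTree α
  | .node a _ _, [] => .node a none none
  | .node a l _, false :: d =>
      .node a (match l with | none => none | some t => some (restrictLex t d)) none
  | .node a l r, true :: d =>
      .node a l (match r with | none => none | some t => some (restrictLex t d))

/-- The lexicographic order on tree addresses. -/
def lexLe (d e : List Bool) : Prop :=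
  d <+: e ∨ ∃ (c x y : List Bool), d = c ++ false :: x ∧ e = c ++ true :: y

/-! ## Deterministic finite automata with output (Moore machines) -/

structure Moore (α ω : Type) where
  St : Type
  fin : Finite St
  init : St
  step : St → α → St
  out : St → ω

def Moore.output {α ω : Type} (M : Moore α ω) (w : List α) : ω :=
  M.out (w.foldl M.step M.init)

/-- The decomposition `0 = j₀ ≤ i₁ < j₁ ≤ ⋯ ≤ i_n < j_n ≤ i_{n+1} = length(ρ)−1`
of a return which does not pass `Pop₁` of its initial stack. -/
def RetDecomp {Q A Γ : Type} [DecidableEq A] {S : CPS Q A Γ} (ρ : Run S)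
    (n : ℕ) (ii jj : ℕ → ℕ) : Prop :=
  jj 0 = 0 ∧ ii (n + 1) = ρ.len - 1 ∧
  (∀ k, 1 ≤ k → k ≤ n → jj (k - 1) ≤ ii k ∧ ii k < jj k) ∧
  jj n ≤ ii (n + 1) ∧
  (∀ k, 1 ≤ k → k ≤ n + 1 → ∀ m, jj (k - 1) ≤ m → m ≤ ii k →
    StackPrefix (ρ.stk 0) (ρ.stk m)) ∧
  (∀ k, 1 ≤ k → k ≤ n → ∀ w : Word A, top2 (ρ.stk 0) = some w →
    1 < w.length ∧ top2 (ρ.stk (ii k + 1)) = some w.dropLast ∧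
      RetSeg ρ (ii k + 1) (jj k)) ∧
  (∀ k, 1 ≤ k → k ≤ n → top2 (ρ.stk (ii k)) = top2 (ρ.stk 0) ∧
    (ρ.op (ii k) = Op.pop1 ∨
      (ρ.op (ii k) = Op.collapse ∧ lvlS (ρ.stk (ii k)) = some 1))) ∧
  (∀ w : Word A, top2 (ρ.stk 0) = some w →
    ((∃ w', top2 (ρ.stk (ρ.len - 1)) = some w' ∧ w <+: w' ∧ w ≠ w' ∧
        ρ.op (ρ.len - 1) = Op.collapse ∧ lvlS (ρ.stk (ρ.len - 1)) = some 2) ∨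
      (∃ w', top2 (ρ.stk (ρ.len - 1)) = some w' ∧ w <+: w' ∧
        ρ.op (ρ.len - 1) = Op.pop2)))

/-!
Let `ρ` be a return from `t ++ [w]` to `t` that avoids `Pop₁`. All stacks before the end have the
form `t ++ z :: r`, and `z` keeps the prefix `w`, because it could lose it only by passing
`t ++ [w.dropLast]`. Hence the words above `t` all extend `w` until a copy of `w` is shortened on
some stack `t ++ r ++ [w]` with `r ≠ []`. When the width next drops to that of `t ++ r` or below,
the run is at `t ++ r`, which extends `t ++ [w]` again. Indeed a collapse at this point follows
either a link written onto the word right above `t ++ r`, which leads to `t ++ r`, or a link already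
present in `w.dropLast`, which leads to `t` or below; the latter would be the last step of `ρ`, made
from a topmost word shorter than `w`, whereas a return that avoids `Pop₁` closes from a topmost word
extending `w`. As the links in `w.dropLast` lead below `t ++ r`, the excursion is itself a return.
Iterating gives the decomposition, and it is unique since each excursion starts at the first stack
that does not extend `t ++ [w]` and ends where its return does.
-/

section Auxiliary

variable {α : Type}

theorem exists_forall_le_not_succ {P : ℕ → Prop} {j m : ℕ} (hj : P j) (hjm : j ≤ m)
    (hm : ¬ P m) : ∃ i, j ≤ i ∧ i < m ∧ (∀ c, j ≤ c → c ≤ i → P c) ∧ ¬ P (i + 1) := by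
  classical
  have hex : ∃ c, j ≤ c ∧ ¬ P c := ⟨m, hjm, hm⟩
  obtain ⟨hle, hnot⟩ := Nat.find_spec hex
  have hlt : j < Nat.find hex := hle.lt_of_ne fun h => hnot (h ▸ hj)
  refine ⟨Nat.find hex - 1, by omega, ?_, fun c hc hci => ?_, ?_⟩
  · have := Nat.find_min' hex ⟨hjm, hm⟩
    omega
  · by_contra hPc
    exact Nat.find_min hex (m := c) (by omega) ⟨hc, hPc⟩
  · rwa [Nat.sub_add_cancel (by omega)]

theorem prefix_dropLast_of_ne {p x : List α} (h : p <+: x) (hne : x ≠ p) : p <+: x.dropLast := by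
  rcases List.eq_nil_or_concat' x with rfl | ⟨y, a, rfl⟩
  · exact h
  · simpa [hne.symm] using List.prefix_concat_iff.1 h

theorem top2_append_singleton (t : Stack2 α) (w : Word α) : top2 (t ++ [w]) = some w := by
  simp [top2]

theorem exists_eq_append_of_pop2 {s u : Stack2 α} (h : pop2 s = some u) :
    u ≠ [] ∧ ∃ w, s = u ++ [w] := by
  rcases List.eq_nil_or_concat' s with rfl | ⟨t, w, rfl⟩
  · simp [pop2] at h
  · obtain ⟨ht, rfl⟩ : t ≠ [] ∧ t = u := by simpa [pop2, List.length_pos_iff] using h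
    exact ⟨ht, w, rfl⟩

theorem pop2_append_singleton {t : Stack2 α} (ht : t ≠ []) (w : Word α) :
    pop2 (t ++ [w]) = some t := by
  simp [pop2, List.length_pos_iff.2 ht]

theorem pop1_append_singleton (t u : Stack2 α) (w : Word α) :
    pop1 (t ++ [w]) = some u ↔ 1 < w.length ∧ t ++ [w.dropLast] = u := by
  simp [pop1]

end Auxiliary

/-! ## Substacks and prefixes -/

section Order

variable {α : Type}

theorem length_iter_le {f : Stack2 α → Option (Stack2 α)}
    (hf : ∀ s u, f s = some u → u.length ≤ s.length) (n : ℕ) :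
    ∀ {s u : Stack2 α}, iter f n s = some u → u.length ≤ s.length := by
  induction n with
  | zero => rintro s u ⟨⟩; exact le_rfl
  | succ n ih =>
    intro s u h
    obtain ⟨v, hv, hu⟩ := Option.bind_eq_some_iff.1 h
    exact (ih hu).trans (hf s v hv)

theorem Substack.length_le {s u : Stack2 α} (h : Substack u s) : u.length ≤ s.length := by
  obtain ⟨n, m, h⟩ := h
  obtain ⟨v, hv, hu⟩ := Option.bind_eq_some_iff.1 h
  have hpop2 : ∀ s u : Stack2 α, pop2 s = some u → u.length ≤ s.length := by
    intro s u h
    obtain ⟨-, w, rfl⟩ := exists_eq_append_of_pop2 h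
    simp
  have hpop1 : ∀ s u : Stack2 α, pop1 s = some u → u.length ≤ s.length := by
    intro s u h
    rcases List.eq_nil_or_concat' s with rfl | ⟨t, w, rfl⟩
    · simp [pop1] at h
    · obtain ⟨-, rfl⟩ := (pop1_append_singleton t u w).1 h
      simp
  exact (length_iter_le hpop1 n hu).trans (length_iter_le hpop2 m hv)

theorem iter_pop2_eq_take (m : ℕ) :
    ∀ {s : Stack2 α}, m < s.length → iter pop2 m s = some (s.take (s.length - m)) := by
  induction m with
  | zero => intro s _; simp [iter]
  | succ m ih =>
    intro s h
    rw [iter, pop2, if_pos (by omega), Option.bind_some, ih (by simp; omega)]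
    simp only [List.dropLast_eq_take, List.take_take, List.length_take]
    congr 2
    omega

theorem substack_take {t : Stack2 α} {k : ℕ} (hk : 0 < k) (hkt : k ≤ t.length) :
    Substack (t.take k) t := by
  refine ⟨0, t.length - k, ?_⟩
  rw [iter_pop2_eq_take _ (by omega), Nat.sub_sub_self hkt]
  rfl

theorem stackPrefix_append_singleton_iff {t : Stack2 α} {w : Word α} {u : Stack2 α} :
    StackPrefix (t ++ [w]) u ↔ ∃ r, r ≠ [] ∧ u = t ++ r ∧ ∀ x ∈ r, w <+: x := by
  constructor
  · rintro ⟨-, hlen, hpre, hall⟩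
    rw [List.dropLast_concat] at hpre
    obtain ⟨r, rfl⟩ := hpre
    refine ⟨r, ?_, rfl, fun x hx => ?_⟩
    · rintro rfl
      simp at hlen
    · obtain ⟨i, hi, rfl⟩ := List.getElem_of_mem hx
      simpa [List.getElem?_append_right, hi] using hall (t.length + i) (by simp) (by simpa using hi)
  · rintro ⟨r, hr, rfl, hall⟩
    have hpos : 0 < r.length := List.length_pos_iff.2 hr
    refine ⟨by simp, by simp; omega, by simp, fun j hj hjr => ?_⟩
    have hj' : t.length ≤ j := by simpa using hj
    have hjlt : j - t.length < r.length := by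
      rw [List.length_append] at hjr
      omega
    simpa [List.getElem?_append_right, hj', hjlt] using hall _ (List.getElem_mem hjlt)

theorem StackPrefix.length_lt {t u : Stack2 α} {w : Word α} (h : StackPrefix (t ++ [w]) u) :
    t.length < u.length := by
  simpa using h.2.1

theorem StackPrefix.prefix_of_top2 {t u : Stack2 α} {w x : Word α}
    (h : StackPrefix (t ++ [w]) u) (hx : top2 u = some x) : w <+: x := by
  obtain ⟨r, hr, rfl, hall⟩ := stackPrefix_append_singleton_iff.1 h
  obtain ⟨r, y, rfl⟩ := (List.eq_nil_or_concat' r).resolve_left hr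
  rw [← List.append_assoc, top2_append_singleton, Option.some_inj] at hx
  exact hx ▸ hall y (by simp)

theorem not_stackPrefix_append_dropLast (t : Stack2 α) {u : Stack2 α} {w : Word α}
    (hw : 1 < w.length) (hu : top2 u = some w.dropLast) : ¬ StackPrefix (t ++ [w]) u := by
  intro h
  have := (h.prefix_of_top2 hu).length_le
  rw [List.length_dropLast] at this
  omega

end Order

/-! ## Effect of a single operation -/

section Operations

variable {α : Type}

/-- The last letter of `u` carries a level-2 link to the substack of width `k`. -/
def EndsWithLink (u : Word α) (k : ℕ) : Prop := ∃ y a, u = y ++ [Sum.inr (a, k)]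

/-- The letters which a push can write onto the `n`-th word of a stack (counting from `0`): a
level-2 link, if present, points to width `n`. -/
def FreshAt (n : ℕ) (l : Letter α) : Prop := ∀ a k, l = Sum.inr (a, k) → k = n

theorem FreshAt.endsWithLink_prefix {n k : ℕ} {l : Letter α} (hl : FreshAt n l) {u w : Word α}
    (hu : EndsWithLink u k) (hpre : u <+: w ++ [l]) : k = n ∨ u <+: w := by
  refine (List.prefix_concat_iff.1 hpre).imp_left fun h => ?_
  obtain ⟨y, a, rfl⟩ := hu
  obtain ⟨-, h⟩ := List.append_inj' h rfl
  exact hl a k (List.singleton_inj.1 h).symm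

/-- The possible outcomes `u` of applying `op` to the stack with topmost word `w` and remaining
words `t`. The two operations that remove words, `Pop₂` and `Collapse` of level 2, are merged into
`cut`, the two that shorten the topmost word into `pop`. -/
inductive OpEffect (op : Op α) (t : Stack2 α) (w : Word α) (u : Stack2 α) : Prop
  | clone (hu : u = t ++ [w] ++ [w])
  | push (l : Letter α) (hl : FreshAt t.length l) (hu : u = t ++ [w ++ [l]])
  | pop (hw : 1 < w.length) (hu : u = t ++ [w.dropLast])
      (hop : op = Op.pop1 ∨ op = Op.collapse ∧ lvlS (t ++ [w]) = some 1)
  | cut (k : ℕ) (hk : 0 < k) (hu : u = (t ++ [w]).take k)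
      (hop : op = Op.pop2 ∧ k = t.length ∨ op = Op.collapse ∧ EndsWithLink w k)

theorem opEffect_of_collapse {t u : Stack2 α} {w : Word α} (h : collapse (t ++ [w]) = some u) :
    OpEffect Op.collapse t w u := by
  rcases List.eq_nil_or_concat' w with rfl | ⟨y, a | ⟨a, k⟩, rfl⟩
  · simp [collapse, top1] at h
  · have hpop : pop1 (t ++ [y ++ [Sum.inl a]]) = some u := by simpa [collapse, top1] using h
    obtain ⟨hlen, rfl⟩ := (pop1_append_singleton ..).1 hpop
    exact .pop hlen rfl (.inr ⟨rfl, by simp [lvlS, top1, lvlOf]⟩)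
  · obtain ⟨hk, rfl⟩ : 0 < k ∧ (t ++ [y ++ [Sum.inr (a, k)]]).take k = u := by
      simpa [collapse, top1] using h
    exact .cut k hk rfl (.inr ⟨rfl, y, a, rfl⟩)

theorem EndsWithLink.lvlS_eq {t : Stack2 α} {w : Word α} {k : ℕ} (h : EndsWithLink w k) :
    lvlS (t ++ [w]) = some 2 := by
  obtain ⟨y, a, rfl⟩ := h
  simp [lvlS, top1, lvlOf]

variable [DecidableEq α] {bot : α} {op : Op α}

theorem ne_nil_of_applyOp {s u : Stack2 α} (h : applyOp bot op s = some u) : s ≠ [] := by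
  rintro rfl
  cases op <;> simp [applyOp, clone2, pop1, pop2, collapse, push1, push2, top1, top2] at h

theorem opEffect_of_applyOp {t u : Stack2 α} {w : Word α}
    (h : applyOp bot op (t ++ [w]) = some u) : OpEffect op t w u := by
  cases op with
  | clone2 => exact .clone (by simpa [applyOp, clone2, top2] using h.symm)
  | pop1 =>
    obtain ⟨hlen, rfl⟩ := (pop1_append_singleton ..).1 h
    exact .pop hlen rfl (.inl rfl)
  | pop2 =>
    obtain ⟨hu, x, hx⟩ := exists_eq_append_of_pop2 h
    obtain ⟨rfl, -⟩ := List.append_inj' hx rfl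
    exact .cut t.length (List.length_pos_iff.2 hu) (by simp) (.inl ⟨rfl, rfl⟩)
  | collapse => exact opEffect_of_collapse h
  | push1 a =>
    have hu : a ≠ bot ∧ t ++ [w ++ [Sum.inl a]] = u := by simpa [applyOp, push1, top2] using h
    exact .push (Sum.inl a) (by simp [FreshAt]) hu.2.symm
  | push2 a =>
    have hu : a ≠ bot ∧ t ++ [w ++ [Sum.inr (a, t.length)]] = u := by
      simpa [applyOp, push2, top2] using h
    exact .push (Sum.inr (a, t.length)) (by simp [FreshAt]) hu.2.symm

theorem base_word_of_applyOp {t r u : Stack2 α} {z : Word α}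
    (h : applyOp bot op (t ++ z :: r) = some u) (hu : t.length < u.length) :
    ∃ z' r', u = t ++ z' :: r' ∧ (z' = z ∨ (∃ l, FreshAt t.length l ∧ z' = z ++ [l]) ∨
      1 < z.length ∧ r' = [] ∧ z' = z.dropLast) := by
  rcases List.eq_nil_or_concat' r with rfl | ⟨r, x, rfl⟩
  · cases opEffect_of_applyOp h with
    | clone hu => exact ⟨z, [z], by simpa using hu, .inl rfl⟩
    | push l hl hu => exact ⟨z ++ [l], [], hu, .inr (.inl ⟨l, hl, rfl⟩)⟩
    | pop hz hu => exact ⟨z.dropLast, [], hu, .inr (.inr ⟨hz, rfl, rfl⟩)⟩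
    | cut k _ hu' =>
      rw [hu', List.length_take] at hu
      exact ⟨z, [], by rw [hu', List.take_of_length_le (by simp; omega)], .inl rfl⟩
  · rw [← List.cons_append, ← List.append_assoc] at h
    cases opEffect_of_applyOp h with
    | clone hu => exact ⟨z, r ++ [x, x], by simpa using hu, .inl rfl⟩
    | push l _ hu => exact ⟨z, r ++ [x ++ [l]], by simpa using hu, .inl rfl⟩
    | pop _ hu => exact ⟨z, r ++ [x.dropLast], by simpa using hu, .inl rfl⟩
    | cut k _ hu' =>
      rw [hu', List.length_take] at hu
      obtain ⟨d, rfl⟩ : ∃ d, k = t.length + (d + 1) := ⟨k - t.length - 1, by omega⟩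
      exact ⟨z, (r ++ [x]).take d, by simp [hu', List.take_append], .inl rfl⟩

theorem applyOp_drop_cases {t r u : Stack2 α} {z : Word α}
    (h : applyOp bot op (t ++ z :: r) = some u) (hu : u.length ≤ t.length) :
    ∃ v k, top2 (t ++ z :: r) = some v ∧ 0 < k ∧ k ≤ t.length ∧ u = t.take k ∧
      (op = Op.pop2 ∧ v = z ∧ k = t.length ∨ op = Op.collapse ∧ EndsWithLink v k) := by
  obtain ⟨r', v, hrv⟩ := (List.eq_nil_or_concat' (z :: r)).resolve_left (List.cons_ne_nil z r)
  rw [hrv, ← List.append_assoc] at h ⊢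
  cases opEffect_of_applyOp h with
  | clone hu' | push l _ hu' | pop _ hu' =>
    have := congrArg List.length hu'
    simp only [List.length_append, List.length_singleton] at this
    omega
  | cut k hk hu' hop =>
    have hkt : k ≤ t.length := by
      rw [hu', List.length_take, List.length_append, List.length_singleton] at hu
      rw [List.length_append] at hu
      omega
    refine ⟨v, k, top2_append_singleton _ _, hk, hkt, ?_, hop.imp_left ?_⟩
    · rw [hu', List.append_assoc, List.take_append_of_le_length hkt]
    · rintro ⟨rfl, hk'⟩
      rw [List.length_append] at hk'
      obtain rfl : r' = [] := List.length_eq_zero_iff.1 (by omega)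
      exact ⟨rfl, (List.cons_eq_cons.1 hrv).1.symm, by simpa using hk'⟩

theorem StackPrefix.exit_of_applyOp {t u u' : Stack2 α} {w : Word α}
    (hpre : StackPrefix (t ++ [w]) u) (h : applyOp bot op u = some u')
    (hlen : t.length < u'.length) (hexit : ¬ StackPrefix (t ++ [w]) u') :
    1 < w.length ∧ (op = Op.pop1 ∨ op = Op.collapse ∧ lvlS u = some 1) ∧
      ∃ r, u = t ++ r ++ [w] ∧ u' = t ++ r ++ [w.dropLast] ∧ ∀ x ∈ r, w <+: x := by
  obtain ⟨r, hr, rfl, hall⟩ := stackPrefix_append_singleton_iff.1 hpre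
  obtain ⟨r, x, rfl⟩ := (List.eq_nil_or_concat' r).resolve_left hr
  obtain ⟨hallr, hwx⟩ : (∀ y ∈ r, w <+: y) ∧ w <+: x := by simpa [or_imp, forall_and] using hall
  have hreplace {y : Word α} (hu' : u' = t ++ r ++ [y]) : ¬ w <+: y := fun hy =>
    hexit (stackPrefix_append_singleton_iff.2
      ⟨r ++ [y], by simp, by simpa using hu', by simpa [or_imp, forall_and] using ⟨hallr, hy⟩⟩)
  rw [← List.append_assoc] at h ⊢
  cases opEffect_of_applyOp h with
  | clone hu =>
    exact absurd (stackPrefix_append_singleton_iff.2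
      ⟨r ++ [x, x], by simp, by simpa using hu, by simpa [or_imp, forall_and] using ⟨hallr, hwx⟩⟩)
      hexit
  | push l _ hu => exact absurd (hwx.trans (List.prefix_append x [l])) (hreplace hu)
  | pop hx hu hop =>
    obtain rfl : x = w := by
      by_contra hne
      exact hreplace hu (prefix_dropLast_of_ne hwx hne)
    exact ⟨hx, hop, r, rfl, hu, hallr⟩
  | cut k _ hu =>
    rw [hu, List.length_take] at hlen
    obtain ⟨d, rfl⟩ : ∃ d, k = t.length + (d + 1) := ⟨k - t.length - 1, by omega⟩
    rw [List.append_assoc, List.take_length_add_append] at hu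
    exact absurd (stackPrefix_append_singleton_iff.2
      ⟨(r ++ [x]).take (d + 1), by simp, hu, fun y hy => hall y (List.mem_of_mem_take hy)⟩) hexit

end Operations

/-! ## Coherence of links -/

section Links

variable {α : Type}

/-- Compatibility of the links of `w` with the words `t` below it. A link to width `k` is written
onto the word with index `k` (counting from `0`), and reaches `w` only by being cloned through all
words in between; so these share with `w` the prefix ending in that link. -/
def LinksCopied (t : Stack2 α) (w : Word α) : Prop :=
  ∀ u k, EndsWithLink u k → u <+: w → k ≤ t.length ∧ ∀ v ∈ t.drop k, u <+: v

/-- The links of every word of `s` are compatible with the words below it. This invariant of stacks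
controls which words can be topmost when a level-2 collapse leads to a given width. -/
def LinkCoherent (s : Stack2 α) : Prop := ∀ t w, t ++ [w] <+: s → LinksCopied t w

theorem linkCoherent_append_singleton_iff {t : Stack2 α} {w : Word α} :
    LinkCoherent (t ++ [w]) ↔ LinkCoherent t ∧ LinksCopied t w := by
  refine ⟨fun h => ⟨fun t' w' ht => h t' w' (ht.trans (List.prefix_append t [w])),
    h t w List.prefix_rfl⟩, fun h t' w' ht => ?_⟩
  rcases List.prefix_concat_iff.1 ht with heq | hpre
  · obtain ⟨rfl, hw⟩ := List.append_inj' heq rfl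
    exact List.singleton_inj.1 hw ▸ h.2
  · exact h.1 t' w' hpre

theorem LinksCopied.of_prefix {t : Stack2 α} {w w' : Word α} (h : LinksCopied t w)
    (hw : w' <+: w) : LinksCopied t w' :=
  fun u k hu huw => h u k hu (huw.trans hw)

theorem LinksCopied.clone {t : Stack2 α} {w : Word α} (h : LinksCopied t w) :
    LinksCopied (t ++ [w]) w := by
  intro u k hu huw
  obtain ⟨hk, hall⟩ := h u k hu huw
  rw [List.drop_append_of_le_length hk, List.length_append]
  exact ⟨by omega, by simpa [or_imp, forall_and] using ⟨hall, huw⟩⟩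

theorem LinksCopied.push {t : Stack2 α} {w : Word α} (h : LinksCopied t w) {l : Letter α}
    (hl : FreshAt t.length l) : LinksCopied t (w ++ [l]) := by
  intro u k hu huw
  rcases hl.endsWithLink_prefix hu huw with rfl | huw
  · simp
  · exact h u k hu huw

theorem LinkCoherent.prefix_of_top2 {t r : Stack2 α} {z u : Word α} {k : ℕ}
    (h : LinkCoherent (t ++ z :: r)) (hu : top2 (t ++ z :: r) = some u) (hlink : EndsWithLink u k)
    (hk : k ≤ t.length) : u <+: z := by
  rcases List.eq_nil_or_concat' r with rfl | ⟨r, x, rfl⟩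
  · rw [top2_append_singleton, Option.some_inj] at hu
    rw [hu]
  · rw [← List.cons_append, ← List.append_assoc] at h hu
    rw [top2_append_singleton, Option.some_inj] at hu
    subst hu
    refine ((linkCoherent_append_singleton_iff.1 h).2 x k hlink List.prefix_rfl).2 z ?_
    simp [List.drop_append_of_le_length hk]

theorem LinkCoherent.applyOp [DecidableEq α] {bot : α} {op : Op α} {s u : Stack2 α}
    (hs : LinkCoherent s) (h : applyOp bot op s = some u) : LinkCoherent u := by
  obtain ⟨t, w, rfl⟩ := (List.eq_nil_or_concat' s).resolve_left (ne_nil_of_applyOp h)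
  obtain ⟨ht, hw⟩ := linkCoherent_append_singleton_iff.1 hs
  cases opEffect_of_applyOp h with
  | clone hu => exact hu ▸ linkCoherent_append_singleton_iff.2 ⟨hs, hw.clone⟩
  | push l hl hu => exact hu ▸ linkCoherent_append_singleton_iff.2 ⟨ht, hw.push hl⟩
  | pop _ hu =>
    exact hu ▸ linkCoherent_append_singleton_iff.2 ⟨ht, hw.of_prefix w.dropLast_prefix⟩
  | cut k _ hu => exact fun t' w' ht' => hs t' w' (ht'.trans (hu ▸ List.take_prefix k _))

theorem IsStack.linkCoherent [DecidableEq α] {bot : α} {s : Stack2 α} (h : IsStack bot s) :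
    LinkCoherent s := by
  induction h with
  | base =>
    refine linkCoherent_append_singleton_iff (t := []).2 ⟨fun t w ht => ?_, fun u k hu hpre => ?_⟩
    · simp at ht
    · obtain ⟨y, a, rfl⟩ := hu
      exact absurd (hpre.mem (a := Sum.inr (a, k)) (by simp)) (by simp)
  | step op _ hstep ih => exact ih.applyOp hstep

end Links

/-! ## Returns -/

section Returns

variable {S : CPS Q A Γ} {ρ : Run S}

theorem Run.applyOp_stk (ρ : Run S) {i : ℕ} (hi : i < ρ.len) :
    applyOp S.bot (ρ.op i) (ρ.stk i) = some (ρ.stk (i + 1)) :=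
  let ⟨_, _, _, h⟩ := ρ.ok i hi
  h

theorem Run.linkCoherent {a : ℕ} (ha : LinkCoherent (ρ.stk a)) :
    ∀ c, a ≤ c → c ≤ ρ.len → LinkCoherent (ρ.stk c) := by
  intro c hac
  induction c, hac using Nat.le_induction with
  | base => exact fun _ => ha
  | succ c _ ih => exact fun hc => (ih (by omega)).applyOp (ρ.applyOp_stk hc)

theorem Run.base_word_induction {P : Word A → Prop} {t : Stack2 A} {v : Word A} {a m : ℕ}
    (ha : ρ.stk a = t ++ [v]) (hm : m ≤ ρ.len)
    (hwidth : ∀ c, a ≤ c → c ≤ m → t.length < (ρ.stk c).length) (hv : P v)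
    (hpush : ∀ z l, FreshAt t.length l → P z → P (z ++ [l]))
    (hpop : ∀ z c, a ≤ c → c ≤ m → 1 < z.length → ρ.stk c = t ++ [z.dropLast] → P z →
      P z.dropLast) :
    ∀ c, a ≤ c → c ≤ m → ∃ z r, ρ.stk c = t ++ z :: r ∧ P z := by
  intro c hac
  induction c, hac using Nat.le_induction with
  | base => exact fun _ => ⟨v, [], ha, hv⟩
  | succ c hac ih =>
    intro hcm
    obtain ⟨z, r, hstk, hz⟩ := ih (by omega)
    obtain ⟨z', r', hstk', rfl | ⟨l, hl, rfl⟩ | ⟨hlen, rfl, rfl⟩⟩ :=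
      base_word_of_applyOp (hstk ▸ ρ.applyOp_stk (by omega)) (hwidth (c + 1) (by omega) hcm)
    · exact ⟨z', r', hstk', hz⟩
    · exact ⟨z ++ [l], r', hstk', hpush z l hl hz⟩
    · exact ⟨z.dropLast, [], hstk', hpop z (c + 1) (by omega) hcm hlen hstk' hz⟩

theorem RetShell.width_lt {a b : ℕ} (h : RetShell ρ a b) :
    ∀ c, a ≤ c → c < b → (ρ.stk b).length < (ρ.stk c).length := by
  obtain ⟨-, hb, hpop, havoid⟩ := h
  obtain ⟨-, v, hv⟩ := exists_eq_append_of_pop2 hpop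
  intro c hac hcb
  by_contra hc
  obtain ⟨i, hai, hic, hwidth, hdrop⟩ := exists_forall_le_not_succ
    (P := fun c => (ρ.stk b).length < (ρ.stk c).length) (by simp [hv]) hac hc
  obtain ⟨z, r, hstk, -⟩ := Run.base_word_induction (P := fun _ => True) hv (by omega) hwidth
    trivial (fun _ _ _ _ => trivial) (fun _ _ _ _ _ _ _ => trivial) i hai le_rfl
  obtain ⟨-, k, -, hk, hkb, htake, -⟩ :=
    applyOp_drop_cases (hstk ▸ ρ.applyOp_stk (by omega)) (not_lt.1 hdrop)
  exact havoid (i + 1) (by omega) (by omega) (htake ▸ substack_take hk hkb)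

theorem retShell_iff {a b : ℕ} : RetShell ρ a b ↔ a < b ∧ b ≤ ρ.len ∧
    pop2 (ρ.stk a) = some (ρ.stk b) ∧
      ∀ c, a ≤ c → c < b → (ρ.stk b).length < (ρ.stk c).length :=
  ⟨fun h => ⟨h.1, h.2.1, h.2.2.1, h.width_lt⟩, fun ⟨hab, hb, hpop, hwidth⟩ =>
    ⟨hab, hb, hpop, fun c hac hcb hsub => (hwidth c hac hcb).not_ge hsub.length_le⟩⟩

theorem RetShell.end_unique {a b b' : ℕ} (h : RetShell ρ a b) (h' : RetShell ρ a b') : b = b' := by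
  have heq : ρ.stk b = ρ.stk b' := Option.some_inj.1 (h.2.2.1.symm.trans h'.2.2.1)
  rcases lt_trichotomy b b' with hlt | hbb | hgt
  · exact absurd (h'.width_lt b h.1.le hlt) (by simp [heq])
  · exact hbb
  · exact absurd (h.width_lt b' h'.1.le hgt) (by simp [heq])

theorem RetSeg.shell {a b : ℕ} (h : RetSeg ρ a b) : RetShell ρ a b := by
  cases h <;> assumption

/-- The segment `[a,b]` of `ρ` does not pass `Pop₁` of its initial stack. -/
def AvoidsPop1 (ρ : Run S) (a b : ℕ) : Prop :=
  ∀ c, a ≤ c → c ≤ b → pop1 (ρ.stk a) ≠ some (ρ.stk c)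

/-- Condition (4) of the decomposition: the step of `ρ` at `e` can end a return from a stack with
topmost word `w` without passing `Pop₁` of that stack. -/
def ClosingStep (ρ : Run S) (e : ℕ) (w : Word A) : Prop :=
  (∃ w', top2 (ρ.stk e) = some w' ∧ w <+: w' ∧ w ≠ w' ∧ ρ.op e = Op.collapse ∧
      lvlS (ρ.stk e) = some 2) ∨
    ∃ w', top2 (ρ.stk e) = some w' ∧ w <+: w' ∧ ρ.op e = Op.pop2

theorem ClosingStep.retSeg {a b : ℕ} {w : Word A} (hclose : ClosingStep ρ (b - 1) w)
    (hshell : RetShell ρ a b) (hw : top2 (ρ.stk a) = some w) : RetSeg ρ a b := by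
  obtain ⟨w', htop, hpre, hne, hop, -⟩ | ⟨-, -, -, hop⟩ := hclose
  · exact .collapse hshell hop ⟨w, w', hw, htop, hpre, hne⟩
  · exact .pop2 hshell hop

/-- The base word keeps the prefix `v`, as it cannot shrink to `v.dropLast`. By coherence of links,
a final collapse either follows a link written above `v`, or a link already present in `v`. -/
theorem RetShell.closingStep_or {a b : ℕ} {v : Word A} (h : RetShell ρ a b)
    (hcoh : LinkCoherent (ρ.stk a)) (hv : ρ.stk a = ρ.stk b ++ [v]) (havoid : AvoidsPop1 ρ a b) :
    ClosingStep ρ (b - 1) v ∨ ρ.op (b - 1) = Op.collapse ∧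
      ∃ u, top2 (ρ.stk (b - 1)) = some u ∧ u <+: v ∧ EndsWithLink u (ρ.stk b).length := by
  have hab := h.1
  have hb := h.2.1
  obtain ⟨z, r, hstk, hvz⟩ := Run.base_word_induction (P := (v <+: ·)) (m := b - 1) hv (by omega)
    (fun c hac hcb => h.width_lt c hac (by omega)) List.prefix_rfl
    (fun z l _ hz => hz.trans (List.prefix_append z [l]))
    (fun z c hac hcb hlen hc hz => prefix_dropLast_of_ne hz <| by
      rintro rfl
      exact havoid c hac (by omega) (hv ▸ (pop1_append_singleton ..).2 ⟨hlen, hc.symm⟩))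
    (b - 1) (by omega) le_rfl
  have hstep := ρ.applyOp_stk (i := b - 1) (by omega)
  rw [Nat.sub_add_cancel (by omega)] at hstep
  obtain ⟨u, k, hu, hk, hkb, htake, ⟨hop, rfl, -⟩ | ⟨hop, hlink⟩⟩ :=
    applyOp_drop_cases (hstk ▸ hstep) le_rfl
  · exact .inl (.inr ⟨u, hstk ▸ hu, hvz, hop⟩)
  · obtain rfl : k = (ρ.stk b).length := by
      have := congrArg List.length htake
      rw [List.length_take] at this
      omega
    have huz : u <+: z :=
      (hstk ▸ Run.linkCoherent hcoh (b - 1) (by omega) (by omega)).prefix_of_top2 hu hlink hkb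
    rw [← hstk] at hu
    by_cases huv : u <+: v
    · exact .inr ⟨hop, u, hu, huv, hlink⟩
    · have hvu : v <+: u := (List.prefix_or_prefix_of_prefix hvz huz).resolve_right huv
      obtain ⟨t, ht⟩ := List.getLast?_eq_some_iff.1 hu
      exact .inl (.inl ⟨u, hu, hvu, fun heq => huv (heq ▸ List.prefix_rfl), hop,
        ht ▸ hlink.lvlS_eq⟩)

theorem RetSeg.closingStep {a b : ℕ} {v : Word A} (h : RetSeg ρ a b)
    (hcoh : LinkCoherent (ρ.stk a)) (hv : ρ.stk a = ρ.stk b ++ [v]) (havoid : AvoidsPop1 ρ a b) :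
    ClosingStep ρ (b - 1) v := by
  obtain hclose | ⟨hop, u, hu, huv, -⟩ := h.shell.closingStep_or hcoh hv havoid
  · exact hclose
  · cases h with
    | pop2 _ hop' => exact absurd (hop.symm.trans hop') (by simp)
    | collapse _ _ hpre =>
      obtain ⟨w, w', hw, hw', hpre, hne⟩ := hpre
      obtain rfl : v = w := by simpa [hv, top2_append_singleton] using hw
      obtain rfl : u = w' := Option.some_inj.1 (hu.symm.trans hw')
      exact absurd (hpre.eq_of_length_le huv.length_le) hne
    | sub _ hac hcb hpop _ => exact absurd hpop (havoid _ hac.le hcb)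

theorem RetShell.retSeg_of_links_lt {b : ℕ} {v : Word A} : ∀ {a : ℕ}, RetShell ρ a b →
    LinkCoherent (ρ.stk a) → ρ.stk a = ρ.stk b ++ [v] →
    (∀ u k, EndsWithLink u k → u <+: v → k < (ρ.stk b).length) → RetSeg ρ a b := by
  induction hn : v.length using Nat.strong_induction_on generalizing v with
  | _ n ih =>
    intro a h hcoh hv hlinks
    by_cases havoid : AvoidsPop1 ρ a b
    · obtain hclose | ⟨-, u, -, huv, hlink⟩ := h.closingStep_or hcoh hv havoid
      · exact hclose.retSeg h (by rw [hv, top2_append_singleton])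
      · exact absurd (hlinks u _ hlink huv) (lt_irrefl _)
    · obtain ⟨c, hac, hcb, hpop⟩ : ∃ c, a ≤ c ∧ c ≤ b ∧ pop1 (ρ.stk a) = some (ρ.stk c) := by
        simpa [AvoidsPop1] using havoid
      obtain ⟨hlen, hc⟩ := (pop1_append_singleton ..).1 (hv ▸ hpop)
      have hca : c ≠ a := by
        rintro rfl
        have := congrArg List.length (List.singleton_inj.1 (List.append_cancel_left (hc.trans hv)))
        rw [List.length_dropLast] at this
        omega
      have hcb' : c ≠ b := by
        rintro rfl
        simp at hc
      have hbot : ρ.stk b ≠ [] := (exists_eq_append_of_pop2 h.2.2.1).1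
      have hshell : RetShell ρ c b := retShell_iff.2 ⟨by omega, h.2.1,
        hc ▸ pop2_append_singleton hbot _, fun d hcd hdb => h.width_lt d (by omega) hdb⟩
      refine .sub h (by omega) hcb hpop (ih v.dropLast.length (by simp; omega) rfl hshell
        (Run.linkCoherent hcoh c hac (hcb.trans h.2.1)) hc.symm fun u k hu huv => ?_)
      exact hlinks u k hu (huv.trans v.dropLast_prefix)

end Returns

/-! ## Excursions below the topmost word -/

section Excursions

variable {S : CPS Q A Γ} {ρ : Run S} {t : Stack2 A} {w : Word A}

theorem Run.first_drop_cases {v : Word A} {a i : ℕ} (hcoh : LinkCoherent (ρ.stk a))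
    (ha : ρ.stk a = t ++ [v]) (hai : a ≤ i) (hi : i < ρ.len)
    (hwidth : ∀ c, a ≤ c → c ≤ i → t.length < (ρ.stk c).length)
    (hdrop : (ρ.stk (i + 1)).length ≤ t.length) :
    ρ.stk (i + 1) = t ∨ ∃ u k, top2 (ρ.stk i) = some u ∧ u <+: v ∧ EndsWithLink u k ∧
      ρ.stk (i + 1) = t.take k := by
  obtain ⟨z, r, hstk, hz⟩ := Run.base_word_induction
    (P := fun z => ∀ u k, EndsWithLink u k → u <+: z → k = t.length ∨ u <+: v) ha hi.le hwidth
    (fun _ _ _ huv => .inr huv)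
    (fun z l hl hz u k hu huz =>
      (hl.endsWithLink_prefix hu huz).elim .inl (hz u k hu))
    (fun z _ _ _ _ _ hz u k hu huz => hz u k hu (huz.trans z.dropLast_prefix)) i hai le_rfl
  obtain ⟨u, k, hu, -, hkt, htake, ⟨-, -, rfl⟩ | ⟨-, hlink⟩⟩ :=
    applyOp_drop_cases (hstk ▸ ρ.applyOp_stk hi) hdrop
  · exact .inl (by simpa using htake)
  · have huz : u <+: z :=
      (hstk ▸ Run.linkCoherent hcoh i hai hi.le).prefix_of_top2 hu hlink hkt
    obtain rfl | huv := hz u k hlink huz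
    · exact .inl (by simpa using htake)
    · exact .inr ⟨u, k, hstk ▸ hu, huv, hlink, htake⟩

/-- One round `j ≤ i < j'` of the decomposition: `ρ` extends the stack `t ++ [w]` from `j` to `i`,
then shortens a copy of `w` and deletes the result by a return from `i + 1` to `j'`. -/
structure Excursion (ρ : Run S) (t : Stack2 A) (w : Word A) (j i j' : ℕ) : Prop where
  le : j ≤ i
  stackPrefix : ∀ m, j ≤ m → m ≤ i → StackPrefix (t ++ [w]) (ρ.stk m)
  top2_exit : top2 (ρ.stk i) = some w
  op_exit : ρ.op i = Op.pop1 ∨ ρ.op i = Op.collapse ∧ lvlS (ρ.stk i) = some 1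
  one_lt_length : 1 < w.length
  top2_entry : top2 (ρ.stk (i + 1)) = some w.dropLast
  retSeg : RetSeg ρ (i + 1) j'

theorem Excursion.lt {j i j' : ℕ} (h : Excursion ρ t w j i j') : i + 1 < j' :=
  h.retSeg.shell.1

theorem Excursion.not_stackPrefix {j i j' : ℕ} (h : Excursion ρ t w j i j') :
    ¬ StackPrefix (t ++ [w]) (ρ.stk (i + 1)) :=
  not_stackPrefix_append_dropLast t h.one_lt_length h.top2_entry

theorem Excursion.unique {j i₁ j₁ i₂ j₂ : ℕ} (h₁ : Excursion ρ t w j i₁ j₁)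
    (h₂ : Excursion ρ t w j i₂ j₂) : i₁ = i₂ ∧ j₁ = j₂ := by
  obtain rfl : i₁ = i₂ := by
    have hle₁ := h₁.le
    have hle₂ := h₂.le
    rcases lt_trichotomy i₁ i₂ with hlt | heq | hgt
    · exact absurd (h₂.stackPrefix (i₁ + 1) (by omega) hlt) h₁.not_stackPrefix
    · exact heq
    · exact absurd (h₁.stackPrefix (i₂ + 1) (by omega) hgt) h₂.not_stackPrefix
  exact ⟨rfl, h₁.retSeg.shell.end_unique h₂.retSeg.shell⟩

/-- If the part of the run below `t ++ r` started by a collapse following a link in `w.dropLast`,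
it would already be the final step, which needs a topmost word extending `w`. -/
theorem RetSeg.first_drop_eq {a b e i : ℕ} {r : Stack2 A} (h : RetSeg ρ a b)
    (hcoh : LinkCoherent (ρ.stk a)) (hw : ρ.stk a = ρ.stk b ++ [w]) (havoid : AvoidsPop1 ρ a b)
    (hlen : 1 < w.length) (hai : a ≤ i) (hie : i ≤ e) (heb : e < b)
    (hi : ρ.stk i = ρ.stk b ++ r ++ [w.dropLast])
    (hwidth : ∀ c, i ≤ c → c ≤ e → (ρ.stk b ++ r).length < (ρ.stk c).length)
    (hdrop : (ρ.stk (e + 1)).length ≤ (ρ.stk b ++ r).length) :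
    ρ.stk (e + 1) = ρ.stk b ++ r := by
  have hb := h.shell.2.1
  refine (Run.first_drop_cases (Run.linkCoherent hcoh i hai (by omega)) hi hie (by omega) hwidth
    hdrop).resolve_right ?_
  rintro ⟨u, k, hu, huw, hlink, htake⟩
  have hkb : k ≤ (ρ.stk b).length := ((linkCoherent_append_singleton_iff.1 (hw ▸ hcoh)).2 u k hlink
    (huw.trans w.dropLast_prefix)).1
  obtain rfl : e = b - 1 := by
    by_contra hne
    have := h.shell.width_lt (e + 1) (by omega) (by omega)
    rw [htake, List.length_take] at this
    omega
  obtain ⟨w', hw', hpre⟩ : ∃ w', top2 (ρ.stk (b - 1)) = some w' ∧ w <+: w' := by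
    obtain ⟨w', hw', hpre, -⟩ | ⟨w', hw', hpre, -⟩ := h.closingStep hcoh hw havoid <;>
      exact ⟨w', hw', hpre⟩
  obtain rfl : u = w' := Option.some_inj.1 (hu.symm.trans hw')
  have := (hpre.trans huw).length_le
  rw [List.length_dropLast] at this
  omega

theorem RetSeg.exists_excursion {a b j i : ℕ} (h : RetSeg ρ a b)
    (hcoh : LinkCoherent (ρ.stk a)) (hw : ρ.stk a = ρ.stk b ++ [w]) (havoid : AvoidsPop1 ρ a b)
    (haj : a ≤ j) (hji : j ≤ i) (hib : i + 1 < b)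
    (hpre : ∀ m, j ≤ m → m ≤ i → StackPrefix (ρ.stk b ++ [w]) (ρ.stk m))
    (hexit : ¬ StackPrefix (ρ.stk b ++ [w]) (ρ.stk (i + 1))) :
    ∃ j', j' < b ∧ Excursion ρ (ρ.stk b) w j i j' ∧
      StackPrefix (ρ.stk b ++ [w]) (ρ.stk j') := by
  have hb := h.shell.2.1
  obtain ⟨hlen, hop, r, hi, hi', hr⟩ := (hpre i hji le_rfl).exit_of_applyOp
    (ρ.applyOp_stk (by omega)) (h.shell.width_lt (i + 1) (by omega) hib) hexit
  have hr0 : r ≠ [] := by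
    rintro rfl
    rw [List.append_nil] at hi'
    exact havoid (i + 1) (by omega) hib.le (hw ▸ (pop1_append_singleton ..).2 ⟨hlen, hi'.symm⟩)
  have hrlen : 0 < r.length := List.length_pos_iff.2 hr0
  obtain ⟨e, hie, heb, hwidth, hdrop⟩ := exists_forall_le_not_succ (j := i + 1) (m := b)
    (P := fun c => (ρ.stk b ++ r).length < (ρ.stk c).length) (by simp [hi']) hib.le (by simp)
  have he : ρ.stk (e + 1) = ρ.stk b ++ r := h.first_drop_eq hcoh hw havoid hlen (by omega) hie heb
    hi' hwidth (not_lt.1 hdrop)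
  have heb' : e + 1 < b := by
    refine lt_of_le_of_ne heb ?_
    rintro rfl
    simp [hr0] at he
  have hshell : RetShell ρ (i + 1) (e + 1) := retShell_iff.2 ⟨by omega, by omega,
    by rw [hi', he, pop2_append_singleton (by simp [hr0])],
    fun c hc hce => he ▸ hwidth c hc (by omega)⟩
  have hret : RetSeg ρ (i + 1) (e + 1) := hshell.retSeg_of_links_lt
    (Run.linkCoherent hcoh (i + 1) (by omega) (by omega)) (he ▸ hi') fun u k hu huw => by
      have hk := ((linkCoherent_append_singleton_iff.1 (hw ▸ hcoh)).2 u k hu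
        (huw.trans w.dropLast_prefix)).1
      rw [he, List.length_append]
      omega
  exact ⟨e + 1, heb', ⟨hji, hpre, hi ▸ top2_append_singleton _ _, hop, hlen,
    hi' ▸ top2_append_singleton _ _, hret⟩, stackPrefix_append_singleton_iff.2 ⟨r, hr0, he, hr⟩⟩

end Excursions

/-! ## Decompositions -/

section Decompositions

variable {S : CPS Q A Γ} {ρ : Run S} {t : Stack2 A} {w : Word A}

/-- The decomposition of the segment `[j,e]` of `ρ` into `n` excursions, where all stacks outside
excursions extend `t ++ [w]`. The `k`-th excursion, counting from `0`, is
`jj k ≤ ii k < jj (k + 1)`; thus `ii` is shifted by one against `RetDecomp`. -/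
structure Decomposition (ρ : Run S) (t : Stack2 A) (w : Word A) (j e n : ℕ) (ii jj : ℕ → ℕ) :
    Prop where
  start_eq : jj 0 = j
  end_eq : ii n = e
  excursion : ∀ k, k < n → Excursion ρ t w (jj k) (ii k) (jj (k + 1))
  le : jj n ≤ e
  stackPrefix : ∀ m, jj n ≤ m → m ≤ e → StackPrefix (t ++ [w]) (ρ.stk m)

variable {j e n : ℕ} {ii jj : ℕ → ℕ}

theorem Decomposition.cons {i j' : ℕ} (h : Decomposition ρ t w j' e n ii jj)
    (hex : Excursion ρ t w j i j') :
    Decomposition ρ t w j e (n + 1) (fun k => k.casesOn i ii) (fun k => k.casesOn j jj) where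
  start_eq := rfl
  end_eq := h.end_eq
  excursion
    | 0, _ => (h.start_eq.symm ▸ hex : Excursion ρ t w j i (jj 0))
    | k + 1, hk => h.excursion k (by omega)
  le := h.le
  stackPrefix := h.stackPrefix

theorem Decomposition.head (h : Decomposition ρ t w j e (n + 1) ii jj) :
    Excursion ρ t w j (ii 0) (jj 1) :=
  h.start_eq ▸ h.excursion 0 n.succ_pos

theorem Decomposition.tail (h : Decomposition ρ t w j e (n + 1) ii jj) :
    Decomposition ρ t w (jj 1) e n (fun k => ii (k + 1)) (fun k => jj (k + 1)) where
  start_eq := rfl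
  end_eq := h.end_eq
  excursion k hk := h.excursion (k + 1) (by omega)
  le := h.le
  stackPrefix := h.stackPrefix

theorem Decomposition.start_le_end (h : Decomposition ρ t w j e n ii jj) : j ≤ e := by
  induction n generalizing j ii jj with
  | zero => exact h.start_eq ▸ h.le
  | succ n ih =>
    have hle := h.head.le
    have hlt := h.head.lt
    have htail := ih h.tail
    omega

theorem Decomposition.stackPrefix_start (h : Decomposition ρ t w j e n ii jj) :
    StackPrefix (t ++ [w]) (ρ.stk j) := by
  cases n with
  | zero => exact h.stackPrefix j h.start_eq.le h.start_le_end
  | succ n => exact h.head.stackPrefix j le_rfl h.head.le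

theorem Decomposition.stackPrefix_or_width_lt (h : Decomposition ρ t w j e n ii jj) :
    ∀ m, j ≤ m → m ≤ e → StackPrefix (t ++ [w]) (ρ.stk m) ∨ t.length + 1 < (ρ.stk m).length := by
  induction n generalizing j ii jj with
  | zero => exact fun m hjm hme => .inl (h.stackPrefix m (h.start_eq ▸ hjm) hme)
  | succ n ih =>
    intro m hjm hme
    rcases le_or_gt m (ii 0) with hmi | him
    · exact .inl (h.head.stackPrefix m hjm hmi)
    · rcases lt_or_ge m (jj 1) with hmj | hjm'
      · have hreturn := h.head.retSeg.shell.width_lt m him hmj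
        have hend := h.tail.stackPrefix_start.length_lt
        exact .inr (by omega)
      · exact ih h.tail m hjm' hme

theorem Decomposition.width_lt (h : Decomposition ρ t w j e n ii jj) :
    ∀ m, j ≤ m → m ≤ e → t.length < (ρ.stk m).length :=
  fun m hjm hme => (h.stackPrefix_or_width_lt m hjm hme).elim StackPrefix.length_lt
    fun hlt => by omega

theorem Decomposition.not_stackPrefix_of_pos (h : Decomposition ρ t w j e n ii jj) (hn : 0 < n) :
    ∃ m, j ≤ m ∧ m ≤ e ∧ ¬ StackPrefix (t ++ [w]) (ρ.stk m) := by
  cases n with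
  | zero => exact absurd hn (lt_irrefl 0)
  | succ n =>
    have hle := h.head.le
    have hlt := h.head.lt
    have hend := h.tail.start_le_end
    exact ⟨ii 0 + 1, by omega, by omega, h.head.not_stackPrefix⟩

theorem Decomposition.unique {n' : ℕ} {ii' jj' : ℕ → ℕ} (h : Decomposition ρ t w j e n ii jj)
    (h' : Decomposition ρ t w j e n' ii' jj') :
    n' = n ∧ ∀ k, k ≤ n → ii' k = ii k ∧ jj' k = jj k := by
  induction n generalizing j ii jj n' ii' jj' with
  | zero =>
    obtain rfl : n' = 0 := by
      by_contra hn'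
      obtain ⟨m, hjm, hme, hm⟩ := h'.not_stackPrefix_of_pos (Nat.pos_of_ne_zero hn')
      exact hm (h.stackPrefix m (h.start_eq ▸ hjm) hme)
    refine ⟨rfl, fun k hk => ?_⟩
    obtain rfl : k = 0 := Nat.le_zero.1 hk
    exact ⟨h'.end_eq.trans h.end_eq.symm, h'.start_eq.trans h.start_eq.symm⟩
  | succ n ih =>
    cases n' with
    | zero =>
      obtain ⟨m, hjm, hme, hm⟩ := h.not_stackPrefix_of_pos n.succ_pos
      exact absurd (h'.stackPrefix m (h'.start_eq ▸ hjm) hme) hm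
    | succ n' =>
      obtain ⟨hi, hj⟩ := h'.head.unique h.head
      obtain ⟨rfl, htail⟩ := ih h.tail (hj ▸ h'.tail)
      refine ⟨rfl, fun k hk => ?_⟩
      cases k with
      | zero => exact ⟨hi, h'.start_eq.trans h.start_eq.symm⟩
      | succ k => exact htail k (by omega)

theorem RetSeg.exists_decomposition {a b : ℕ} (h : RetSeg ρ a b) (hcoh : LinkCoherent (ρ.stk a))
    (hw : ρ.stk a = ρ.stk b ++ [w]) (havoid : AvoidsPop1 ρ a b) (haj : a ≤ j) (hjb : j < b)
    (hj : StackPrefix (ρ.stk b ++ [w]) (ρ.stk j)) :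
    ∃ n ii jj, Decomposition ρ (ρ.stk b) w j (b - 1) n ii jj := by
  induction hd : b - j using Nat.strong_induction_on generalizing j with
  | _ d ih =>
    by_cases hall : ∀ m, j ≤ m → m ≤ b - 1 → StackPrefix (ρ.stk b ++ [w]) (ρ.stk m)
    · exact ⟨0, fun _ => b - 1, fun _ => j, rfl, rfl, by simp, by omega, hall⟩
    · push Not at hall
      obtain ⟨m, hjm, hmb, hm⟩ := hall
      obtain ⟨i, hji, him, hpre, hexit⟩ := exists_forall_le_not_succ
        (P := fun m => StackPrefix (ρ.stk b ++ [w]) (ρ.stk m)) hj hjm hm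
      obtain ⟨j', hj'b, hex, hj'⟩ :=
        h.exists_excursion hcoh hw havoid haj hji (by omega) hpre hexit
      have := hex.lt
      obtain ⟨n, ii, jj, hdec⟩ := ih (b - j') (by omega) (by omega) hj'b hj' rfl
      exact ⟨n + 1, _, _, hdec.cons hex⟩

theorem retDecomp_iff (h0 : ρ.stk 0 = t ++ [w]) : RetDecomp ρ n ii jj ↔
    Decomposition ρ t w 0 (ρ.len - 1) n (fun k => ii (k + 1)) jj ∧
      ClosingStep ρ (ρ.len - 1) w := by
  simp only [RetDecomp, h0, top2_append_singleton, Option.some_inj, forall_eq']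
  constructor
  · rintro ⟨hstart, hend, hlt, hle, hpre, hret, hexit, hclose⟩
    refine ⟨⟨hstart, hend, fun k hk => ?_, hend ▸ hle, fun m hjm hme => ?_⟩, hclose⟩
    · obtain ⟨hlen, htop, hseg⟩ := hret (k + 1) (by omega) hk
      exact ⟨(hlt (k + 1) (by omega) hk).1, hpre (k + 1) (by omega) (by omega),
        (hexit (k + 1) (by omega) hk).1, (hexit (k + 1) (by omega) hk).2, hlen, htop, hseg⟩
    · exact hpre (n + 1) (by omega) le_rfl m hjm (hend ▸ hme)
  · rintro ⟨hdec, hclose⟩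
    have hex (k : ℕ) (h1 : 1 ≤ k) (hkn : k ≤ n) : Excursion ρ t w (jj (k - 1)) (ii k) (jj k) := by
      simpa [Nat.sub_add_cancel h1] using hdec.excursion (k - 1) (by omega)
    refine ⟨hdec.start_eq, hdec.end_eq,
      fun k h1 hkn => ⟨(hex k h1 hkn).le, by have := (hex k h1 hkn).lt; omega⟩,
      hdec.end_eq ▸ hdec.le, fun k h1 hkn => ?_,
      fun k h1 hkn =>
        ⟨(hex k h1 hkn).one_lt_length, (hex k h1 hkn).top2_entry, (hex k h1 hkn).retSeg⟩,
      fun k h1 hkn => ⟨(hex k h1 hkn).top2_exit, (hex k h1 hkn).op_exit⟩, hclose⟩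
    rcases hkn.lt_or_eq with hlt | rfl
    · exact (hex k h1 (by omega)).stackPrefix
    · exact fun m hjm hme => hdec.stackPrefix m hjm (hdec.end_eq ▸ hme)

end Decompositions

section Characterization

variable {S : CPS Q A Γ} {ρ : Run S} {w : Word A} {a b n : ℕ} {ii jj : ℕ → ℕ}

theorem Decomposition.retSeg (h : Decomposition ρ (ρ.stk b) w a (b - 1) n ii jj)
    (hclose : ClosingStep ρ (b - 1) w) (hab : a < b) (hb : b ≤ ρ.len)
    (hbot : ρ.stk b ≠ []) (hw : ρ.stk a = ρ.stk b ++ [w]) : RetSeg ρ a b :=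
  hclose.retSeg
    (retShell_iff.2 ⟨hab, hb, hw ▸ pop2_append_singleton hbot w,
      fun c hac hcb => h.width_lt c hac (by omega)⟩)
    (hw ▸ top2_append_singleton _ w)

theorem Decomposition.avoidsPop1 (h : Decomposition ρ (ρ.stk b) w a (b - 1) n ii jj)
    (hw : ρ.stk a = ρ.stk b ++ [w]) : AvoidsPop1 ρ a b := by
  intro c hac hcb hpop
  obtain ⟨hlen, hc⟩ := (pop1_append_singleton ..).1 (hw ▸ hpop)
  rcases hcb.lt_or_eq with hlt | rfl
  · rcases h.stackPrefix_or_width_lt c hac (by omega) with hpre | hwidth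
    · exact not_stackPrefix_append_dropLast _ hlen (hc ▸ top2_append_singleton _ _) hpre
    · simp [← hc] at hwidth
  · simp at hc

theorem retSeg_avoidsPop1_iff (hcoh : LinkCoherent (ρ.stk 0)) :
    RetSeg ρ 0 ρ.len ∧ AvoidsPop1 ρ 0 ρ.len ↔
      pop2 (ρ.stk 0) = some (ρ.stk ρ.len) ∧ ∃ n ii jj, RetDecomp ρ n ii jj := by
  constructor
  · rintro ⟨hret, havoid⟩
    obtain ⟨hpos, -, hpop, -⟩ := hret.shell
    obtain ⟨-, w, hw⟩ := exists_eq_append_of_pop2 hpop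
    obtain ⟨n, ii, jj, hdec⟩ := hret.exists_decomposition hcoh hw havoid le_rfl hpos
      (stackPrefix_append_singleton_iff.2 ⟨[w], by simp, hw, by simp⟩)
    exact ⟨hpop, n, fun k => ii (k - 1), jj,
      (retDecomp_iff hw).2 ⟨hdec, hret.closingStep hcoh hw havoid⟩⟩
  · rintro ⟨hpop, n, ii, jj, h⟩
    obtain ⟨hbot, w, hw⟩ := exists_eq_append_of_pop2 hpop
    obtain ⟨hdec, hclose⟩ := (retDecomp_iff hw).1 h
    have hpos : 0 < ρ.len := by
      refine Nat.pos_of_ne_zero fun hzero => ?_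
      rw [hzero] at hw
      simp at hw
    exact ⟨hdec.retSeg hclose hpos le_rfl hbot hw, hdec.avoidsPop1 hw⟩

theorem RetDecomp.unique {n' : ℕ} {ii' jj' : ℕ → ℕ} (h : RetDecomp ρ n ii jj)
    (h' : RetDecomp ρ n' ii' jj') :
    n' = n ∧ (∀ k, 1 ≤ k → k ≤ n + 1 → ii' k = ii k) ∧ ∀ k, k ≤ n → jj' k = jj k := by
  have ⟨_, _, _, hle, hpre, _⟩ := h
  have hne : ρ.stk 0 ≠ [] := (hpre (n + 1) (by omega) le_rfl (jj n) le_rfl hle).1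
  obtain ⟨t, w, hw⟩ := (List.eq_nil_or_concat' (ρ.stk 0)).resolve_left hne
  obtain ⟨hn, heq⟩ := ((retDecomp_iff hw).1 h).1.unique ((retDecomp_iff hw).1 h').1
  refine ⟨hn, fun k hk hkn => ?_, fun k hk => (heq k hk).2⟩
  simpa [Nat.sub_add_cancel hk] using (heq (k - 1) (by omega)).1

end Characterization

/-- A run starting at `s` is a return from `s` to `Pop₂(s)` not
passing `Pop₁(s)` iff it is in `Runs(s,Pop₂(s))` and admits a uniquely determined
decomposition as in `RetDecomp`. -/
theorem return_decomposition_unique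
    {Q A Γ : Type} [DecidableEq A] (S : CPS Q A Γ)
    (s : Stack2 A) (hs : IsStack S.bot s) (ρ : Run S) (h0 : ρ.stk 0 = s) :
    (RetSeg ρ 0 ρ.len ∧ ∀ i, i ≤ ρ.len → ∀ t, pop1 s = some t → ρ.stk i ≠ t) ↔
    ((∃ s', pop2 s = some s' ∧ ρ.stk ρ.len = s') ∧
      ∃ (n : ℕ) (ii jj : ℕ → ℕ), RetDecomp ρ n ii jj ∧
        ∀ (n' : ℕ) (ii' jj' : ℕ → ℕ), RetDecomp ρ n' ii' jj' →
          n' = n ∧ (∀ k, 1 ≤ k → k ≤ n + 1 → ii' k = ii k) ∧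
            (∀ k, k ≤ n → jj' k = jj k)) := by
  subst h0
  have havoid : (∀ i, i ≤ ρ.len → ∀ t, pop1 (ρ.stk 0) = some t → ρ.stk i ≠ t) ↔
      AvoidsPop1 ρ 0 ρ.len :=
    ⟨fun h i _ hi hpop => h i hi _ hpop rfl,
      fun h i hi t hpop heq => h i (Nat.zero_le i) hi (heq ▸ hpop)⟩
  rw [havoid, retSeg_avoidsPop1_iff hs.linkCoherent]
  constructor
  · rintro ⟨hpop, n, ii, jj, h⟩
    exact ⟨⟨_, hpop, rfl⟩, n, ii, jj, h, fun _ _ _ h' => h.unique h'⟩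
  · rintro ⟨⟨_, hpop, rfl⟩, n, ii, jj, h, -⟩
    exact ⟨hpop, n, ii, jj, h⟩

end CPG
end

section
/- For every level-2 collapsible pushdown system S=(Q,Σ,Γ,Δ,q₀) there is a deterministic finite automaton with output over the input alphabet Σ ∪ (Σ×{2}×{0}) with at most 2^{|Q|²} states which, reading the word w↓₀ for any word w that occurs as the topmost word of some stack in Stacks(Σ), outputs the set ExRet(w). -/
namespace CPG

variable {Q A Γ : Type} [DecidableEq A]

/-! A return from `[v, v]` with `v = w↓₀` is the same as a run from width 2 that ends at its first
stack of smaller width. Indeed, the only transition reaching width 1 besides `Pop₂` is a `Collapse`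
along a link to width 1. Since the links of `v` itself are `0`, such a link sits above a copy of
`v`, unless the run has removed a letter of `v`, and then one argues by induction on `v`. Such a
descent never looks at the words below the one it starts from, so it can be relocated onto any
nonempty stack.

Consequently `ExRet (v ++ [a])` depends only on `a` and the set `ExRet v`. A descent from
`[v ++ [a], v ++ [a]]` is replayed with `v'` in place of `v` as long as the topmost word is longer
than `v`; once the topmost word is `v`, the run has to perform a return of `v`, and
`ExRet v ⊆ ExRet v'` provides a return of `v'` with the same states. Hence the sets of pairs of
states can serve as the states of the automaton. -/

/-! ### Stack operations acting on the topmost word -/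

/-- The effect of an operation on a stack with topmost word `w ++ [l]` and remaining words `C`:
`StackStep bot op C w l t` says that `op` turns `C ++ [w ++ [l]]` into `t`. Splitting the stack into
`C`, `w` and `l` makes case analysis on the operation and its applicability possible. -/
inductive StackStep {A : Type} (bot : A) :
    Op A → Stack2 A → Word A → Letter A → Stack2 A → Prop where
  | clone2 {C w l} : StackStep bot .clone2 C w l (C ++ [w ++ [l]] ++ [w ++ [l]])
  | push1 {C w l a} : a ≠ bot → StackStep bot (.push1 a) C w l (C ++ [w ++ [l] ++ [Sum.inl a]])
  | push2 {C w l a} : a ≠ bot →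
      StackStep bot (.push2 a) C w l (C ++ [w ++ [l] ++ [Sum.inr (a, C.length)]])
  | pop1 {C w l} : w ≠ [] → StackStep bot .pop1 C w l (C ++ [w])
  | pop2 {C w l} : C ≠ [] → StackStep bot .pop2 C w l C
  | collapse_level1 {C w a} : w ≠ [] → StackStep bot .collapse C w (Sum.inl a) (C ++ [w])
  | collapse_level2 {C w a k} : 0 < k →
      StackStep bot .collapse C w (Sum.inr (a, k)) ((C ++ [w ++ [Sum.inr (a, k)]]).take k)

theorem applyOp_eq_some_iff {A : Type} [DecidableEq A] {bot : A} {op : Op A} {C t : Stack2 A}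
    {w : Word A} {l : Letter A} :
    applyOp bot op (C ++ [w ++ [l]]) = some t ↔ StackStep bot op C w l t := by
  constructor
  · intro h
    cases op with
    | clone2 =>
      obtain rfl : C ++ [w ++ [l]] ++ [w ++ [l]] = t := by simpa [applyOp, clone2, top2] using h
      exact .clone2
    | pop1 =>
      obtain ⟨hw, rfl⟩ : w ≠ [] ∧ C ++ [w] = t := by
        simpa [applyOp, pop1, List.length_pos_iff] using h
      exact .pop1 hw
    | pop2 =>
      obtain ⟨hC, rfl⟩ : C ≠ [] ∧ C = t := by simpa [applyOp, pop2, List.length_pos_iff] using h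
      exact .pop2 hC
    | push1 a =>
      obtain ⟨ha, rfl⟩ : a ≠ bot ∧ C ++ [w ++ [l] ++ [Sum.inl a]] = t := by
        simpa [applyOp, push1, top2] using h
      exact .push1 ha
    | push2 a =>
      obtain ⟨ha, rfl⟩ : a ≠ bot ∧ C ++ [w ++ [l] ++ [Sum.inr (a, C.length)]] = t := by
        simpa [applyOp, push2, top2] using h
      exact .push2 ha
    | collapse =>
      rcases l with a | ⟨a, k⟩
      · obtain ⟨hw, rfl⟩ : w ≠ [] ∧ C ++ [w] = t := by
          simpa [applyOp, collapse, top1, pop1, List.length_pos_iff] using h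
        exact .collapse_level1 hw
      · obtain ⟨hk, rfl⟩ : 0 < k ∧ (C ++ [w ++ [Sum.inr (a, k)]]).take k = t := by
          simpa [applyOp, collapse, top1] using h
        exact .collapse_level2 hk
  · rintro (_ | h | h | h | h | h | h) <;>
      simp [applyOp, clone2, push1, push2, pop1, pop2, collapse, top1, top2,
        List.length_pos_iff, *]

theorem StackStep.pop2_or_collapse_of_length_eq_one {A : Type} {bot : A} {op : Op A}
    {C t : Stack2 A} {w : Word A} {l : Letter A} (h : StackStep bot op C w l t) (hC : C ≠ [])
    (ht : t.length = 1) : op = .pop2 ∨ op = .collapse ∧ ∃ a, l = Sum.inr (a, 1) := by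
  have hC' : 0 < C.length := List.length_pos_iff.2 hC
  cases h with
  | pop2 _ => exact .inl rfl
  | @collapse_level2 _ _ a k hk =>
    obtain rfl : k = 1 := by
      rw [List.length_take, List.length_append, List.length_singleton] at ht
      omega
    exact .inr ⟨rfl, a, rfl⟩
  | clone2 | push1 _ | push2 _ | pop1 _ | collapse_level1 _ => simp [hC] at ht

theorem transOp_concat_iff {S : CPS Q A Γ} {γ : Γ} {op : Op A} {q : Q} {c' : Q × Stack2 A}
    {C : Stack2 A} {w : Word A} {l : Letter A} :
    TransOp S γ op (q, C ++ [w ++ [l]]) c' ↔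
      (q, symOf l, γ, c'.1, op) ∈ S.Δ ∧ StackStep S.bot op C w l c'.2 := by
  simp [TransOp, symS, top1, applyOp_eq_some_iff]

theorem not_transOp_concat_nil {S : CPS Q A Γ} {γ : Γ} {op : Op A} {q : Q} {c' : Q × Stack2 A}
    {C : Stack2 A} : ¬ TransOp S γ op (q, C ++ [[]]) c' := by
  simp [TransOp, symS, top1]

theorem TransOp.exists_stackStep {S : CPS Q A Γ} {γ : Γ} {op : Op A} {c c' : Q × Stack2 A}
    (h : TransOp S γ op c c') :
    ∃ C w l, c.2 = C ++ [w ++ [l]] ∧ StackStep S.bot op C w l c'.2 := by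
  obtain ⟨q, s⟩ := c
  rcases List.eq_nil_or_concat s with rfl | ⟨C, w, rfl⟩
  · simp [TransOp, symS, top1] at h
  rw [List.concat_eq_append] at h ⊢
  rcases List.eq_nil_or_concat w with rfl | ⟨w, l, rfl⟩
  · exact absurd h not_transOp_concat_nil
  rw [List.concat_eq_append] at h ⊢
  exact ⟨C, w, l, rfl, (transOp_concat_iff.1 h).2⟩

/-! ### Descents -/

/-- `Descent S N k c c'`: there is a run of length `k` from `c` to `c'`, and `c'` is its first
configuration whose stack has width at most `N`. -/
inductive Descent (S : CPS Q A Γ) (N : ℕ) : ℕ → Q × Stack2 A → Q × Stack2 A → Prop where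
  | refl {c} : c.2.length ≤ N → Descent S N 0 c c
  | head {k c c₁ c'} {γ : Γ} {op : Op A} : N < c.2.length → TransOp S γ op c c₁ →
      Descent S N k c₁ c' → Descent S N (k + 1) c c'

namespace Descent

variable {S : CPS Q A Γ} {N k : ℕ} {c c' : Q × Stack2 A}

theorem eq_of_length_le (h : Descent S N k c c') (hc : c.2.length ≤ N) : c' = c := by
  cases h with
  | refl => rfl
  | head hN => omega

theorem pos (h : Descent S N k c c') (hc : N < c.2.length) : 0 < k := by
  cases h with
  | refl => omega
  | head => omega

theorem trans {M m : ℕ} {c₁ : Q × Stack2 A} (hNM : N ≤ M) (h : Descent S M m c c₁)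
    (h' : Descent S N k c₁ c') : ∃ n, Descent S N n c c' := by
  induction h with
  | refl => exact ⟨k, h'⟩
  | head hM ht _ ih =>
    obtain ⟨n, hn⟩ := ih h'
    exact ⟨n + 1, .head (by omega) ht hn⟩

theorem factor {M : ℕ} (hNM : N ≤ M) (h : Descent S N k c c') :
    ∃ m n c₁, m + n = k ∧ Descent S M m c c₁ ∧ Descent S N n c₁ c' := by
  induction h with
  | refl hN => exact ⟨0, 0, _, rfl, .refl (by omega), .refl hN⟩
  | @head k c c₁ c' γ op hN ht h ih =>
    by_cases hM : c.2.length ≤ M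
    · exact ⟨0, k + 1, c, by omega, .refl hM, .head hN ht h⟩
    · obtain ⟨m, n, c₂, rfl, h₁, h₂⟩ := ih
      exact ⟨m + 1, n, c₂, by omega, .head (by omega) ht h₁, h₂⟩

theorem exists_run (γ₀ : Γ) (h : Descent S N k c c') :
    ∃ ρ : Run S, ρ.len = k ∧ ρ.cfg 0 = c ∧ ρ.cfg k = c' ∧ ∀ i < k, N < (ρ.stk i).length := by
  induction h with
  | @refl c _ =>
    exact ⟨⟨0, fun _ => c, fun _ => γ₀, fun _ => .pop1, by simp⟩, rfl, rfl, rfl, by simp⟩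
  | @head k c c₁ c' γ op hN ht _ ih =>
    obtain ⟨ρ, rfl, rfl, rfl, hρ⟩ := ih
    refine ⟨⟨ρ.len + 1, fun i => Nat.casesOn i c ρ.cfg, fun i => Nat.casesOn i γ ρ.lab,
      fun i => Nat.casesOn i op ρ.op, ?_⟩, rfl, rfl, rfl, ?_⟩
    · rintro (_ | i) hi
      · exact ht
      · exact ρ.ok i (by omega)
    · rintro (_ | i) hi
      · exact hN
      · exact hρ i (by omega)

end Descent

theorem Run.exists_descent {S : CPS Q A Γ} (ρ : Run S) {N n : ℕ} :
    ∀ {i}, i + n ≤ ρ.len → (ρ.stk (i + n)).length ≤ N →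
      ∃ m ≤ n, Descent S N m (ρ.cfg i) (ρ.cfg (i + m)) := by
  induction n with
  | zero => exact fun _ h => ⟨0, le_rfl, .refl h⟩
  | succ n ih =>
    intro i hi h
    by_cases hN : (ρ.stk i).length ≤ N
    · exact ⟨0, by omega, .refl hN⟩
    · have hassoc (m : ℕ) : i + 1 + m = i + (m + 1) := by omega
      obtain ⟨m, hm, hd⟩ := ih (i := i + 1) (by omega) (by rwa [hassoc])
      rw [hassoc] at hd
      exact ⟨m + 1, by omega, .head (not_le.1 hN) (ρ.ok i (by omega)) hd⟩

/-! ### Similar stacks -/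

/-- Similarity of letters standing above bases of width `b` and `b'`: equal symbols and levels, and
level-2 links that are both `0` or point to the same height above the respective base. -/
inductive LetterSim {A : Type} (b b' : ℕ) : Letter A → Letter A → Prop where
  | level1 (a) : LetterSim b b' (Sum.inl a) (Sum.inl a)
  | link_zero (a) : LetterSim b b' (Sum.inr (a, 0)) (Sum.inr (a, 0))
  | link_add (a n) : LetterSim b b' (Sum.inr (a, b + n)) (Sum.inr (a, b' + n))

/-- Words that arise from `p` and `p'` by appending similar letters. -/
inductive WordSim {A : Type} (b b' : ℕ) (p p' : Word A) : Word A → Word A → Prop where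
  | base : WordSim b b' p p' p p'
  | concat {w w' l l'} : WordSim b b' p p' w w' → LetterSim b b' l l' →
      WordSim b b' p p' (w ++ [l]) (w' ++ [l'])

/-- Stacks that arise from the bases `B` and `B'` by adding words similar over `p` and `p'`. -/
inductive StackSim {A : Type} (B B' : Stack2 A) (p p' : Word A) :
    Stack2 A → Stack2 A → Prop where
  | base : StackSim B B' p p' B B'
  | concat {s s' w w'} : StackSim B B' p p' s s' → WordSim B.length B'.length p p' w w' →
      StackSim B B' p p' (s ++ [w]) (s' ++ [w'])

theorem LetterSim.symOf_eq {A : Type} {b b' : ℕ} {l l' : Letter A} (h : LetterSim b b' l l') :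
    symOf l = symOf l' := by
  cases h <;> rfl

theorem WordSim.append_down0 {A : Type} {b b' : ℕ} {p p' w w' : Word A}
    (h : WordSim b b' p p' w w') (y : Word A) :
    WordSim b b' p p' (w ++ down0 y) (w' ++ down0 y) := by
  induction y generalizing w w' with
  | nil => simpa [down0] using h
  | cons l y ih =>
    rcases l with a | ⟨a, k⟩
    · simpa [down0] using ih (h.concat (.level1 a))
    · simpa [down0] using ih (h.concat (.link_zero a))

theorem WordSim.eq_of_right_eq_nil {A : Type} {b b' : ℕ} {p p' w : Word A}
    (h : WordSim b b' p p' w []) : w = p ∧ p' = [] := by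
  generalize hw' : ([] : Word A) = w' at h
  cases h with
  | base => exact ⟨rfl, rfl⟩
  | concat => simp at hw'

namespace StackSim

variable {A : Type} {B B' : Stack2 A} {p p' : Word A}

theorem concat_down0 (B B' : Stack2 A) (w : Word A) :
    StackSim B B' [] [] (B ++ [down0 w]) (B' ++ [down0 w]) :=
  .concat .base (WordSim.base.append_down0 w)

theorem exists_length_eq {s s' : Stack2 A} (h : StackSim B B' p p' s s') :
    ∃ n, s.length = B.length + n ∧ s'.length = B'.length + n := by
  induction h with
  | base => exact ⟨0, rfl, rfl⟩
  | concat _ _ ih =>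
    obtain ⟨n, hn, hn'⟩ := ih
    simp only [List.length_append, List.length_singleton]
    exact ⟨n + 1, by omega, by omega⟩

theorem take {s s' : Stack2 A} (h : StackSim B B' p p' s s') (n : ℕ) :
    StackSim B B' p p' (s.take (B.length + n)) (s'.take (B'.length + n)) := by
  induction h with
  | base =>
    rw [List.take_of_length_le (by omega), List.take_of_length_le (by omega)]
    exact .base
  | concat h hw ih =>
    obtain ⟨m, hm, hm'⟩ := h.exists_length_eq
    by_cases hnm : n ≤ m
    · rwa [List.take_append_of_le_length (by omega), List.take_append_of_le_length (by omega)]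
    · rw [List.take_of_length_le (by simp only [List.length_append, List.length_singleton]; omega),
        List.take_of_length_le (by simp only [List.length_append, List.length_singleton]; omega)]
      exact h.concat hw

end StackSim

-- `Pop₁` is undefined on words of length 1, so the two sides can only be out of step when it
-- empties `w'` but not `w`; `hpop` excludes this.
theorem StackStep.exists_stackSim {A : Type} {bot : A} {op : Op A} {B B' C C' t : Stack2 A}
    {p p' w w' : Word A} {l l' : Letter A} (h : StackStep bot op C w l t) (hB' : B' ≠ [])
    (hC : StackSim B B' p p' C C') (hw : WordSim B.length B'.length p p' w w')
    (hl : LetterSim B.length B'.length l l') (hpop : w ≠ [] → w' = [] → t ≠ C ++ [w]) :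
    ∃ t', StackStep bot op C' w' l' t' ∧ StackSim B B' p p' t t' := by
  have hB'_pos : 0 < B'.length := List.length_pos_iff.2 hB'
  obtain ⟨n, hn, hn'⟩ := hC.exists_length_eq
  have hwl := hw.concat hl
  cases h with
  | clone2 => exact ⟨_, .clone2, (hC.concat hwl).concat hwl⟩
  | @push1 _ _ _ a ha => exact ⟨_, .push1 ha, hC.concat (hwl.concat (.level1 a))⟩
  | @push2 _ _ _ a ha =>
    refine ⟨_, .push2 ha, hC.concat (hwl.concat ?_)⟩
    rw [hn, hn']
    exact .link_add a n
  | pop1 hne => exact ⟨_, .pop1 fun hnil => hpop hne hnil rfl, hC.concat hw⟩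
  | pop2 _ => exact ⟨_, .pop2 (List.length_pos_iff.1 (by omega)), hC⟩
  | collapse_level1 hne =>
    cases hl
    exact ⟨_, .collapse_level1 fun hnil => hpop hne hnil rfl, hC.concat hw⟩
  | collapse_level2 hk =>
    cases hl with
    | link_zero => omega
    | link_add a m => exact ⟨_, .collapse_level2 (by omega), (hC.concat hwl).take m⟩

theorem TransOp.exists_stackSim {S : CPS Q A Γ} {γ : Γ} {op : Op A} {q : Q} {c₁ : Q × Stack2 A}
    {B B' C C' : Stack2 A} {p p' w w' : Word A} {l l' : Letter A}
    (h : TransOp S γ op (q, C ++ [w ++ [l]]) c₁) (hB' : B' ≠ [])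
    (hC : StackSim B B' p p' C C') (hw : WordSim B.length B'.length p p' w w')
    (hl : LetterSim B.length B'.length l l') (hpop : w ≠ [] → w' = [] → c₁.2 ≠ C ++ [w]) :
    ∃ t', TransOp S γ op (q, C' ++ [w' ++ [l']]) (c₁.1, t') ∧ StackSim B B' p p' c₁.2 t' := by
  obtain ⟨hΔ, hstep⟩ := transOp_concat_iff.1 h
  obtain ⟨t', hstep', ht'⟩ := hstep.exists_stackSim hB' hC hw hl hpop
  exact ⟨t', transOp_concat_iff.2 ⟨hl.symOf_eq ▸ hΔ, hstep'⟩, ht'⟩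

theorem Descent.relocate {S : CPS Q A Γ} {B B' s' : Stack2 A} {k : ℕ} {c c' : Q × Stack2 A}
    (hB' : B' ≠ []) (h : Descent S B.length k c c') (hs : StackSim B B' [] [] c.2 s') :
    c'.2 = B ∧ Descent S B'.length k (c.1, s') (c'.1, B') := by
  induction h generalizing s' with
  | @refl c hc =>
    obtain ⟨q, s⟩ := c
    cases hs with
    | base => exact ⟨rfl, .refl le_rfl⟩
    | @concat C _ w _ hC _ =>
      obtain ⟨n, hn, -⟩ := hC.exists_length_eq
      change (C ++ [w]).length ≤ B.length at hc
      rw [List.length_append, List.length_singleton] at hc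
      omega
  | @head k c c₁ c' γ op hc ht _ ih =>
    obtain ⟨q, s⟩ := c
    cases hs with
    | base => exact absurd hc (lt_irrefl _)
    | @concat _ C' _ _ hC hw =>
      cases hw with
      | base => exact absurd ht not_transOp_concat_nil
      | concat hw hl =>
        obtain ⟨t', ht', hsim⟩ := ht.exists_stackSim hB' hC hw hl
          fun hne hnil => absurd (hnil ▸ hw).eq_of_right_eq_nil.1 hne
        obtain ⟨hc', hd⟩ := ih hsim
        obtain ⟨n, -, hn⟩ := hC.exists_length_eq
        have hlen (v : Word A) : B'.length < (C' ++ [v]).length := by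
          simp only [List.length_append, List.length_singleton]
          omega
        exact ⟨hc', .head (hlen _) ht' hd⟩

/-! ### Returns -/

/-- `w` has no level-2 link to width 1. -/
def NoLinkOne {A : Type} (w : Word A) : Prop := ∀ a, Sum.inr (a, 1) ∉ w

/-- The words that may occur at height `n` (counted from `0`) of the stacks of a run which starts
in `[x, u]` and visits neither a substack of `[x]` nor `[x, Pop₁ u]`. A copy of `u` at height at
least 2 may lose letters of `u`, but the letters pushed there link to width at least 2. -/
inductive WordGuarded {A : Type} (x u : Word A) : ℕ → Word A → Prop where
  | bottom : WordGuarded x u 0 x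
  | above {n w} : u <+: w → WordGuarded x u (n + 1) w
  | noLinkOne {n w} : NoLinkOne w → WordGuarded x u (n + 2) w

/-- Stacks all of whose words are guarded; `C ++ [w] <+: s` says that `w` is the word of `s` at
height `C.length`. -/
def StackGuarded {A : Type} (x u : Word A) (s : Stack2 A) : Prop :=
  ∀ C w, C ++ [w] <+: s → WordGuarded x u C.length w

theorem noLinkOne_down0 {A : Type} (w : Word A) : NoLinkOne (down0 w) := by
  intro a ha
  obtain ⟨b | b, -, hb⟩ := List.mem_map.1 ha <;> simp at hb

namespace NoLinkOne

variable {A : Type} {w v : Word A}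

theorem of_prefix (h : NoLinkOne w) (hv : v <+: w) : NoLinkOne v :=
  fun a ha => h a (hv.subset ha)

theorem concat {l : Letter A} (h : NoLinkOne w) (hl : ∀ a, l ≠ Sum.inr (a, 1)) :
    NoLinkOne (w ++ [l]) := by
  intro a ha
  rcases List.mem_append.1 ha with ha | ha
  · exact h a ha
  · exact hl a (List.mem_singleton.1 ha).symm

end NoLinkOne

namespace WordGuarded

variable {A : Type} {x u w : Word A} {n : ℕ} {l : Letter A}

theorem succ (h : WordGuarded x u n w) (hn : 0 < n) : WordGuarded x u (n + 1) w := by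
  cases h with
  | bottom => omega
  | above h => exact .above h
  | noLinkOne h => exact .noLinkOne h

theorem push (h : WordGuarded x u n w) (hn : 0 < n) (hl : ∀ a, 2 ≤ n → l ≠ Sum.inr (a, 1)) :
    WordGuarded x u n (w ++ [l]) := by
  cases h with
  | bottom => omega
  | above h => exact .above (h.trans (List.prefix_append _ _))
  | noLinkOne h => exact .noLinkOne (h.concat fun a => hl a (by omega))

theorem pop (hu : NoLinkOne u) (h : WordGuarded x u n (w ++ [l])) (hn : 0 < n) :
    WordGuarded x u n w ∨ n = 1 ∧ u = w ++ [l] := by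
  cases h with
  | bottom => omega
  | @above n _ h =>
    rcases List.prefix_concat_iff.1 h with rfl | h
    · rcases n with _ | n
      · exact .inr ⟨rfl, rfl⟩
      · exact .inl (.noLinkOne (hu.of_prefix (List.prefix_append _ _)))
    · exact .inl (.above h)
  | noLinkOne h => exact .inl (.noLinkOne (h.of_prefix (List.prefix_append _ _)))

end WordGuarded

namespace StackGuarded

variable {A : Type} {x u w : Word A} {s t C : Stack2 A}

theorem of_prefix (h : StackGuarded x u s) (ht : t <+: s) : StackGuarded x u t :=
  fun C w hw => h C w (hw.trans ht)

theorem concat (h : StackGuarded x u C) (hw : WordGuarded x u C.length w) :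
    StackGuarded x u (C ++ [w]) := by
  intro D v hv
  rcases List.prefix_concat_iff.1 hv with heq | hv
  · obtain ⟨rfl, rfl⟩ := List.append_singleton_inj.1 heq
    exact hw
  · exact h D v hv

theorem initial (x u : Word A) : StackGuarded x u [x, u] := by
  have hnil : StackGuarded x u [] := fun C w h => by simp at h
  exact (hnil.concat .bottom).concat (w := u) (.above List.prefix_rfl)

theorem eq_singleton (h : StackGuarded x u C) (hC : C.length = 1) : C = [x] := by
  obtain ⟨w, rfl⟩ := List.length_eq_one_iff.1 hC
  cases h [] w List.prefix_rfl
  rfl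

theorem step {bot : A} {op : Op A} {l : Letter A} (hu : NoLinkOne u)
    (h : StackStep bot op C w l t) (hC : C ≠ []) (hg : StackGuarded x u (C ++ [w ++ [l]]))
    (hpop : u.dropLast ≠ [] → t ≠ [x, u.dropLast]) : StackGuarded x u t := by
  have hC_pos : 0 < C.length := List.length_pos_iff.2 hC
  have hgC : StackGuarded x u C := hg.of_prefix (List.prefix_append _ _)
  have hgw : WordGuarded x u C.length (w ++ [l]) := hg C _ List.prefix_rfl
  have hg_pop (hw : w ≠ []) (ht : t = C ++ [w]) : StackGuarded x u t := by
    rcases hgw.pop hu hC_pos with hgw' | ⟨hlen, rfl⟩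
    · exact ht ▸ hgC.concat hgw'
    · obtain rfl := hgC.eq_singleton hlen
      exact absurd ht (by simpa using hpop (by simpa using hw))
  cases h with
  | clone2 => exact hg.concat (by simpa using hgw.succ hC_pos)
  | push1 _ => exact hgC.concat (hgw.push hC_pos (by simp))
  | push2 _ => exact hgC.concat (hgw.push hC_pos (by grind))
  | pop1 hw => exact hg_pop hw rfl
  | pop2 _ => exact hgC
  | collapse_level1 hw => exact hg_pop hw rfl
  | collapse_level2 _ => exact hg.of_prefix (List.take_prefix _ _)

end StackGuarded

theorem length_eq_of_pop1_eq_some {A : Type} {s t : Stack2 A} (h : pop1 s = some t) :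
    t.length = s.length := by
  rcases List.eq_nil_or_concat' s with rfl | ⟨C, w, rfl⟩
  · simp [pop1] at h
  · obtain ⟨-, rfl⟩ : 1 < w.length ∧ C ++ [w.dropLast] = t := by simpa [pop1] using h
    simp

theorem Substack.length_eq_one {A : Type} {t : Stack2 A} {x : Word A} (h : Substack t [x]) :
    t.length = 1 := by
  have length_iter_pop1 (n : ℕ) (s : Stack2 A) (hs : iter pop1 n s = some t) :
      t.length = s.length := by
    induction n generalizing s with
    | zero => simp [Option.some.inj hs]
    | succ n ih =>
      obtain ⟨s', hs', ht⟩ := Option.bind_eq_some_iff.1 hs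
      rw [ih s' ht, length_eq_of_pop1_eq_some hs']
  obtain ⟨n, m, h⟩ := h
  cases m with
  | zero => exact length_iter_pop1 n _ h
  | succ m => simp [iter, pop2] at h

section Returns

variable {S : CPS Q A Γ} {ρ : Run S} {i j : ℕ} {x u : Word A}

theorem Run.stackGuarded (hj : j ≤ ρ.len) (hu : NoLinkOne u) (hi : ρ.stk i = [x, u])
    (hlen : ∀ k, i ≤ k → k < j → 1 < (ρ.stk k).length)
    (hpop : u.dropLast ≠ [] → ∀ k, i < k → k < j → ρ.stk k ≠ [x, u.dropLast]) {k : ℕ}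
    (hik : i ≤ k) (hkj : k < j) : StackGuarded x u (ρ.stk k) := by
  induction k, hik using Nat.le_induction with
  | base => exact hi ▸ .initial x u
  | succ k hik ih =>
    obtain ⟨C, w, l, hk, hstep⟩ := (ρ.ok k (by omega)).exists_stackStep
    change ρ.stk k = _ at hk
    have hC := hlen k hik (by omega)
    have hg := ih (by omega)
    rw [hk] at hC hg
    have hC_ne : C ≠ [] := by
      rintro rfl
      simp at hC
    exact .step hu hstep hC_ne hg fun hne => hpop hne (k + 1) (by omega) hkj

theorem retShell_of_one_lt_length (hij : i < j) (hj : j ≤ ρ.len) (hi : ρ.stk i = [x, u])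
    (hstk : ρ.stk j = [x]) (hlen : ∀ k, i ≤ k → k < j → 1 < (ρ.stk k).length) :
    RetShell ρ i j := by
  refine ⟨hij, hj, by simp [hi, hstk, pop2], fun k hik hkj hsub => ?_⟩
  rw [hstk] at hsub
  exact (hlen k hik hkj).ne' hsub.length_eq_one

theorem retSeg_of_stk_ne (hij : i < j) (hj : j ≤ ρ.len) (hu : NoLinkOne u)
    (hi : ρ.stk i = [x, u]) (hstk : ρ.stk j = [x])
    (hlen : ∀ k, i ≤ k → k < j → 1 < (ρ.stk k).length)
    (hpop : u.dropLast ≠ [] → ∀ k, i < k → k < j → ρ.stk k ≠ [x, u.dropLast]) :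
    RetSeg ρ i j := by
  have hshell := retShell_of_one_lt_length hij hj hi hstk hlen
  obtain ⟨n, rfl⟩ : ∃ n, j = n + 1 := ⟨j - 1, by omega⟩
  obtain ⟨C, w, l, hn, hstep⟩ := (ρ.ok n (by omega)).exists_stackStep
  change ρ.stk n = _ at hn
  change StackStep _ _ _ _ _ (ρ.stk (n + 1)) at hstep
  have hC : 1 < (C ++ [w ++ [l]]).length := hn ▸ hlen n (by omega) (by omega)
  have hg : StackGuarded x u (C ++ [w ++ [l]]) :=
    hn ▸ Run.stackGuarded hj hu hi hlen hpop (by omega) (by omega)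
  have hC_ne : C ≠ [] := by
    rintro rfl
    simp at hC
  rcases hstep.pop2_or_collapse_of_length_eq_one hC_ne (by simp [hstk])
    with hop | ⟨hop, a, rfl⟩
  · exact .pop2 hshell hop
  · have huw : u <+: w ++ [Sum.inr (a, 1)] := by
      have hgw := hg C _ List.prefix_rfl
      generalize hN : C.length = N at hgw
      cases hgw with
      | bottom => simp [hN] at hC
      | above h => exact h
      | noLinkOne h => exact absurd (by simp) (h a)
    refine .collapse hshell hop ⟨u, _, by simp [hi, top2], by simp [hn, top2], huw, ?_⟩
    rintro rfl
    exact hu a (by simp)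

theorem retSeg_of_one_lt_length (hij : i < j) (hj : j ≤ ρ.len) (hu : NoLinkOne u)
    (hi : ρ.stk i = [x, u]) (hstk : ρ.stk j = [x])
    (hlen : ∀ k, i ≤ k → k < j → 1 < (ρ.stk k).length) : RetSeg ρ i j := by
  induction u using List.reverseRecOn generalizing i with
  | nil => exact retSeg_of_stk_ne hij hj hu hi hstk hlen (by simp)
  | append_singleton v l ih =>
    by_cases hv : v ≠ [] ∧ ∃ k, i < k ∧ k < j ∧ ρ.stk k = [x, v]
    · obtain ⟨hne, k, hik, hkj, hk⟩ := hv
      refine .sub (retShell_of_one_lt_length hij hj hi hstk hlen) hik hkj.le ?_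
        (ih hkj (hu.of_prefix (List.prefix_append _ _)) hk fun m hkm => hlen m (by omega))
      simpa [hi, hk, pop1, List.length_pos_iff] using hne
    · refine retSeg_of_stk_ne hij hj hu hi hstk hlen ?_
      rw [List.dropLast_concat]
      exact fun hne k hik hkj hk => hv ⟨hne, k, hik, hkj, hk⟩

end Returns

/-! ### Exceptional returns as descents -/

theorem RetSeg.retShell {S : CPS Q A Γ} {ρ : Run S} {i j : ℕ} (h : RetSeg ρ i j) :
    RetShell ρ i j := by
  cases h <;> assumption

theorem mem_exRet_iff_descent {S : CPS Q A Γ} {w : Word A} {B : Stack2 A} {q q' : Q}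
    (hB : B ≠ []) :
    (q, q') ∈ ExRet S w ↔ ∃ k, Descent S B.length k (q, B ++ [down0 w]) (q', B) := by
  constructor
  · rintro ⟨ρ, h0, hlen, hret⟩
    obtain ⟨-, -, -, hsub⟩ := hret.retShell
    have hend : (ρ.stk (0 + ρ.len)).length ≤ 1 := by simp [Run.stk, hlen]
    obtain ⟨m, hm, hd⟩ := ρ.exists_descent (by omega) hend
    rw [h0, zero_add] at hd
    obtain ⟨hstk, hd'⟩ := hd.relocate (B := [down0 w]) hB (.concat_down0 [down0 w] B w)
    have hm_eq : m = ρ.len := by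
      by_contra hne
      refine hsub m (by omega) (by omega) ⟨0, 0, ?_⟩
      simp [iter, Run.stk, hstk, hlen]
    subst hm_eq
    rw [hlen] at hd'
    exact ⟨_, hd'⟩
  · rintro ⟨k, hd⟩
    obtain ⟨-, hd'⟩ := hd.relocate (B' := [down0 w]) (by simp) (.concat_down0 B [down0 w] w)
    have hk : 0 < k := hd'.pos (by simp)
    obtain ⟨γ⟩ : Nonempty Γ := by
      cases hd' with
      | @head _ _ _ _ γ => exact ⟨γ⟩
    obtain ⟨ρ, rfl, h0, hlen, hwidth⟩ := hd'.exists_run γ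
    refine ⟨ρ, h0, hlen, ?_⟩
    exact retSeg_of_one_lt_length hk le_rfl (noLinkOne_down0 w) (congrArg Prod.snd h0)
      (congrArg Prod.snd hlen) fun i _ hi => hwidth i hi

theorem exRet_nil (S : CPS Q A Γ) : ExRet S ([] : Word A) = ∅ := by
  refine Set.eq_empty_of_forall_notMem fun ⟨q, q'⟩ h => ?_
  obtain ⟨k, hd⟩ := (mem_exRet_iff_descent (B := [[]]) (by simp)).1 h
  cases hd with
  | head _ ht _ => exact not_transOp_concat_nil ht

theorem Descent.exists_exRet {S : CPS Q A Γ} {N k : ℕ} {q : Q} {C : Stack2 A} {w : Word A}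
    {c' : Q × Stack2 A} (h : Descent S N k (q, C ++ [down0 w]) c') (hN : N ≤ C.length)
    (hC : C ≠ []) :
    ∃ q₁ j, j < k ∧ (q, q₁) ∈ ExRet S w ∧ Descent S N j (q₁, C) c' := by
  obtain ⟨m, j, ⟨q₁, t⟩, rfl, h₁, h₂⟩ := h.factor hN
  obtain rfl : t = C := (h₁.relocate hC (.concat_down0 C C w)).1
  have hm : 0 < m := h₁.pos (by simp)
  exact ⟨q₁, j, by omega, (mem_exRet_iff_descent hC).2 ⟨m, h₁⟩, h₂⟩

theorem Descent.down0_ne_nil {S : CPS Q A Γ} {N k : ℕ} {v v' : Word A} {C : Stack2 A}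
    {c c' : Q × Stack2 A} (h : Descent S N k c c') (hsub : ExRet S v ⊆ ExRet S v')
    (hc : c.2 = C ++ [down0 v]) (hN : N ≤ C.length) (hC : C ≠ []) : down0 v' ≠ [] := by
  intro hv'
  obtain rfl : v' = [] := List.map_eq_nil_iff.1 hv'
  obtain ⟨q, s⟩ := c
  obtain rfl : s = _ := hc
  obtain ⟨q₁, j, -, hret, -⟩ := h.exists_exRet hN hC
  exact (exRet_nil S).subset (hsub hret)

/-! ### The set of returns after appending a letter -/

theorem Descent.exists_of_exRet_subset {S : CPS Q A Γ} {v v' x x' : Word A} {k : ℕ} {q : Q}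
    {s s' : Stack2 A} {c' : Q × Stack2 A} (hsub : ExRet S v ⊆ ExRet S v')
    (h : Descent S 1 k (q, s) c') (hs : StackSim [x] [x'] (down0 v) (down0 v') s s') :
    ∃ k', Descent S 1 k' (q, s') (c'.1, [x']) := by
  induction k using Nat.strong_induction_on generalizing q s s' with
  | _ k ih =>
  cases hs with
  | base =>
    rw [h.eq_of_length_le le_rfl]
    exact ⟨0, .refl le_rfl⟩
  | @concat C C' w w' hC hw =>
    obtain ⟨n, hn, hn'⟩ := hC.exists_length_eq
    simp only [List.length_singleton] at hn hn'
    have hC_ne : C ≠ [] := List.length_pos_iff.1 (by omega)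
    have hC'_pos : 0 < C'.length := by omega
    cases hw with
    | base =>
      obtain ⟨q₁, j, hj, hret, hd⟩ := h.exists_exRet (by omega) hC_ne
      obtain ⟨m, hd₁⟩ := (mem_exRet_iff_descent (List.length_pos_iff.1 hC'_pos)).1 (hsub hret)
      obtain ⟨m', hd₂⟩ := ih j hj hd hC
      exact hd₁.trans hC'_pos hd₂
    | @concat w w' l l' hw hl =>
      cases h with
      | refl h => simp [hC_ne] at h
      | @head k _ c₁ _ γ op _ ht hd =>
        have hpop (hne : w ≠ []) (hnil : w' = []) : c₁.2 ≠ C ++ [w] := by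
          subst hnil
          obtain ⟨rfl, hv'⟩ := hw.eq_of_right_eq_nil
          exact fun hc₁ => hd.down0_ne_nil hsub hc₁ (by omega) hC_ne hv'
        obtain ⟨t', ht', hsim⟩ := ht.exists_stackSim (by simp) hC hw hl hpop
        obtain ⟨k', hd'⟩ := ih k (by omega) hd hsim
        exact ⟨k' + 1, .head (by simpa using hC'_pos) ht' hd'⟩

theorem exRet_append_subset {S : CPS Q A Γ} {v v' : Word A} (h : ExRet S v ⊆ ExRet S v')
    (l : Letter A) : ExRet S (v ++ [l]) ⊆ ExRet S (v' ++ [l]) := by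
  rintro ⟨q, q'⟩ hq
  have down0_append (w : Word A) : down0 (w ++ [l]) = down0 w ++ down0 [l] := List.map_append
  obtain ⟨k, hd⟩ := (mem_exRet_iff_descent (B := [down0 (v ++ [l])]) (by simp)).1 hq
  refine (mem_exRet_iff_descent (B := [down0 (v' ++ [l])]) (by simp)).2
    (hd.exists_of_exRet_subset h (.concat .base ?_))
  rw [down0_append, down0_append]
  exact WordSim.base.append_down0 [l]

theorem exRet_append_factorsThrough (S : CPS Q A Γ) (l : Letter A) :
    (fun v => ExRet S (v ++ [l])).FactorsThrough (ExRet S) :=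
  fun _ _ h => (exRet_append_subset h.subset l).antisymm (exRet_append_subset h.superset l)

/-! ### The automaton -/

theorem exists_moore_output_eq {α ω : Type} [Finite ω] (f : List α → ω)
    (hf : ∀ a, (fun v => f (v ++ [a])).FactorsThrough f) :
    ∃ M : Moore α ω, Nat.card M.St = Nat.card ω ∧ ∀ w, M.output w = f w := by
  refine ⟨⟨ω, inferInstance, f [], fun x a => Function.extend f (fun v => f (v ++ [a])) id x, id⟩,
    rfl, fun w => ?_⟩
  induction w using List.reverseRecOn with
  | nil => rfl
  | append_singleton v a ih =>
    simp only [Moore.output, id] at ih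
    simp only [Moore.output, List.foldl_append, List.foldl_cons, List.foldl_nil, ih, id]
    exact (hf a).extend_apply id v

theorem exRet_down0 (S : CPS Q A Γ) (w : Word A) : ExRet S (down0 w) = ExRet S w := by
  have hdown0 : down0 (down0 w) = down0 w := by
    simp only [down0, List.map_map]
    congr 1
    funext l
    rcases l with a | ⟨a, k⟩ <;> rfl
  simp [ExRet, hdown0]

theorem exRet_computable_by_moore_general
    {Q A Γ : Type} [Fintype Q] [DecidableEq A] (S : CPS Q A Γ) :
    ∃ M : Moore (Letter A) (Set (Q × Q)),
      Nat.card M.St ≤ 2 ^ (Fintype.card Q * Fintype.card Q) ∧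
      ∀ w : Word A, M.output (down0 w) = ExRet S w := by
  obtain ⟨M, hcard, hM⟩ := exists_moore_output_eq (ExRet S) (exRet_append_factorsThrough S)
  refine ⟨M, ?_, fun w => (hM _).trans (exRet_down0 S w)⟩
  rw [hcard, Nat.card_eq_fintype_card, Fintype.card_set, Fintype.card_prod]

/-- There is a deterministic finite automaton with output with at
most `2^(|Q|²)` states computing `ExRet(w)` on input `w↓₀`, for every word `w`
occurring as the topmost word of some stack. -/
theorem exRet_computable_by_moore
    {Q A Γ : Type} [Fintype Q] [DecidableEq A] (S : CPS Q A Γ) :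
    ∃ M : Moore (Letter A) (Set (Q × Q)),
      Nat.card M.St ≤ 2 ^ (Fintype.card Q * Fintype.card Q) ∧
      ∀ (s : Stack2 A) (w : Word A), IsStack S.bot s → top2 s = some w →
        M.output (down0 w) = ExRet S w := by
  obtain ⟨M, hcard, hM⟩ := exRet_computable_by_moore_general S
  exact ⟨M, hcard, fun _ w _ _ => hM w⟩

end CPG
end
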